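/- arXiv:1904.07713 — 2 statements merged into one kernel-verified Lean document; each statement's English description precedes it below -/
import Mathlib

section
/- Let n ≥ 1 and let u : ℝⁿ → ℝ be a C² function satisfying the self-shrinker equation −√2 · Σ_{i=1}^n 1/(1 + λ_i(D²u(x))) = −u(x) + (1/2)⟨x, Du(x)⟩ for all x ∈ ℝⁿ, and suppose that either D²u(x) > −I for every x ∈ ℝⁿ, or D²u(x) < −I for every x ∈ ℝⁿ. Then u is a quadratic polynomial; more precisely, there exists a symmetric real n×n matrix A with eigenvalues λ̄₁, …, λ̄ₙ (all ≠ −1) such that u(x) = √2 · Σ_{i=1}^n 1/(1 + λ̄_i) + (1/2)⟨x, Ax⟩ for all x ∈ ℝⁿ. -/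
open Real Filter Matrix
open scoped RealInnerProductSpace

noncomputable section

/-- The Hessian matrix of `u` at `x`, with entries the second iterated derivatives
in the coordinate directions. -/
def Hess (n : ℕ) (u : EuclideanSpace ℝ (Fin n) → ℝ) (x : EuclideanSpace ℝ (Fin n)) :
    Matrix (Fin n) (Fin n) ℝ :=
  Matrix.of fun i j =>
    iteratedFDeriv ℝ 2 u x ![EuclideanSpace.single i 1, EuclideanSpace.single j 1]

open Classical in
/-- The eigenvalues of a real symmetric matrix (junk value `0` if not symmetric). -/
def eigs {n : ℕ} (A : Matrix (Fin n) (Fin n) ℝ) : Fin n → ℝ :=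
  if h : A.IsHermitian then h.eigenvalues else 0

/-- `u` is a quadratic polynomial. -/
def IsQuadPoly (n : ℕ) (u : EuclideanSpace ℝ (Fin n) → ℝ) : Prop :=
  ∃ (A : Matrix (Fin n) (Fin n) ℝ) (β : EuclideanSpace ℝ (Fin n)) (c : ℝ), A.IsSymm ∧
    ∀ x, u x = (1/2) * (∑ i, ∑ j, A i j * x i * x j) + ⟪β, x⟫ + c


open MeasureTheory in
/-- Integration by parts against a compactly supported function. -/
theorem bern_ibp {n : ℕ} (f g : EuclideanSpace ℝ (Fin n) → ℝ) (hf : ContDiff ℝ 1 f)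
    (hg : ContDiff ℝ 1 g) (hc : HasCompactSupport g) (e : EuclideanSpace ℝ (Fin n)) :
    ∫ y, f y * fderiv ℝ g y e = - ∫ y, fderiv ℝ f y e * g y := by
  have hfd : Continuous fun y => fderiv ℝ f y e :=
    (hf.continuous_fderiv (by norm_num)).clm_apply continuous_const
  have hgd : Continuous fun y => fderiv ℝ g y e :=
    (hg.continuous_fderiv (by norm_num)).clm_apply continuous_const
  have hcd : HasCompactSupport fun y => fderiv ℝ g y e := hc.fderiv_apply (𝕜 := ℝ) e
  apply integral_mul_fderiv_eq_neg_fderiv_mul_of_integrable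
  · exact (hfd.mul hg.continuous).integrable_of_hasCompactSupport hc.mul_left
  · exact (hf.continuous.mul hgd).integrable_of_hasCompactSupport hcd.mul_left
  · exact (hf.continuous.mul hg.continuous).integrable_of_hasCompactSupport hc.mul_left
  · exact fun x _ => hf.differentiable (by norm_num) x
  · exact fun x _ => hg.differentiable (by norm_num) x

theorem bern_symm {n : ℕ} (v : EuclideanSpace ℝ (Fin n) → ℝ)
    (X : EuclideanSpace ℝ (Fin n) → EuclideanSpace ℝ (Fin n))
    (hv : ∀ y, HasGradientAt v (X y) y) (hX : ContDiff ℝ 1 X)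
    (y a b : EuclideanSpace ℝ (Fin n)) :
    ⟪fderiv ℝ X y a, b⟫ = ⟪fderiv ℝ X y b, a⟫ := by
  have h1 : ∀ y, HasFDerivAt v (innerSL ℝ (X y)) y := fun y => (hv y).hasFDerivAt
  have h2 : HasFDerivAt (fun y => innerSL ℝ (X y)) ((innerSL ℝ).comp (fderiv ℝ X y)) y :=
    (innerSL ℝ (E := EuclideanSpace ℝ (Fin n))).hasFDerivAt.comp y
      (hX.differentiable (by norm_num) y).hasFDerivAt
  have := second_derivative_symmetric h1 h2 a b
  simpa using this

theorem bern_coord_contDiff {n : ℕ}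
    (X : EuclideanSpace ℝ (Fin n) → EuclideanSpace ℝ (Fin n)) (hX : ContDiff ℝ 1 X) (i : Fin n) :
    ContDiff ℝ 1 (fun y => X y i) := by
  exact (EuclideanSpace.proj (𝕜 := ℝ) i).contDiff.comp hX

theorem bern_coord_fderiv {n : ℕ}
    (X : EuclideanSpace ℝ (Fin n) → EuclideanSpace ℝ (Fin n)) (hX : ContDiff ℝ 1 X) (i : Fin n)
    (y e : EuclideanSpace ℝ (Fin n)) :
    fderiv ℝ (fun y => X y i) y e = fderiv ℝ X y e i := by
  have h2 : HasFDerivAt (fun y => X y i)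
      ((EuclideanSpace.proj i : EuclideanSpace ℝ (Fin n) →L[ℝ] ℝ).comp (fderiv ℝ X y)) y :=
    (EuclideanSpace.proj i : EuclideanSpace ℝ (Fin n) →L[ℝ] ℝ).hasFDerivAt.comp y
      (hX.differentiable (by norm_num) y).hasFDerivAt
  rw [h2.fderiv]; rfl

open MeasureTheory in
theorem bern_identity {n : ℕ} (v : EuclideanSpace ℝ (Fin n) → ℝ)
    (X : EuclideanSpace ℝ (Fin n) → EuclideanSpace ℝ (Fin n))
    (hv : ∀ y, HasGradientAt v (X y) y) (hX : ContDiff ℝ 1 X)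
    (ψ : EuclideanSpace ℝ (Fin n) → ℝ)
    (P : EuclideanSpace ℝ (Fin n) → EuclideanSpace ℝ (Fin n))
    (hψ : ∀ y, HasGradientAt ψ (P y) y) (hP : ContDiff ℝ 1 P) (hc : HasCompactSupport ψ) :
    ∫ y, ((1/2) * ⟪y, X y⟫ - v y) * (∑ j, fderiv ℝ P y (EuclideanSpace.single j 1) j)
      + (1/2) * ((∑ j, fderiv ℝ X y (EuclideanSpace.single j 1) j) * (n * ψ y + ⟪y, P y⟫)) = 0 := by
  have hvf : ∀ y, HasFDerivAt v (innerSL ℝ (X y)) y := fun y => (hv y).hasFDerivAt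
  have hψf : ∀ y, HasFDerivAt ψ (innerSL ℝ (P y)) y := fun y => (hψ y).hasFDerivAt
  have hv1 : ContDiff ℝ 1 v := by
    rw [contDiff_one_iff_fderiv]
    refine ⟨fun y => (hvf y).differentiableAt, ?_⟩
    rw [show fderiv ℝ v = fun y => innerSL ℝ (X y) from funext fun y => (hvf y).fderiv]
    exact (innerSL ℝ (E := EuclideanSpace ℝ (Fin n))).continuous.comp hX.continuous
  have hψ1 : ContDiff ℝ 1 ψ := by
    rw [contDiff_one_iff_fderiv]
    refine ⟨fun y => (hψf y).differentiableAt, ?_⟩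
    rw [show fderiv ℝ ψ = fun y => innerSL ℝ (P y) from funext fun y => (hψf y).fderiv]
    exact (innerSL ℝ (E := EuclideanSpace ℝ (Fin n))).continuous.comp hP.continuous
  set T : Fin n → Fin n → EuclideanSpace ℝ (Fin n) → ℝ :=
    fun i j y => fderiv ℝ X y (EuclideanSpace.single j 1) i with hT
  set Q : Fin n → Fin n → EuclideanSpace ℝ (Fin n) → ℝ :=
    fun i j y => fderiv ℝ P y (EuclideanSpace.single j 1) i with hQ
  have hTs : ∀ i j y, T i j y = T j i y := by
    intro i j y
    have := bern_symm v X hv hX y (EuclideanSpace.single j 1) (EuclideanSpace.single i 1)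
    simpa [EuclideanSpace.inner_single_right, hT] using this
  have hQs : ∀ i j y, Q i j y = Q j i y := by
    intro i j y
    have := bern_symm ψ P hψ hP y (EuclideanSpace.single j 1) (EuclideanSpace.single i 1)
    simpa [EuclideanSpace.inner_single_right, hQ] using this
  have hTc : ∀ i j, Continuous (T i j) := fun i j =>
    (EuclideanSpace.proj i : EuclideanSpace ℝ (Fin n) →L[ℝ] ℝ).continuous.comp
      ((hX.continuous_fderiv (by norm_num)).clm_apply continuous_const)
  have hQc : ∀ i j, Continuous (Q i j) := fun i j =>
    (EuclideanSpace.proj i : EuclideanSpace ℝ (Fin n) →L[ℝ] ℝ).continuous.comp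
      ((hP.continuous_fderiv (by norm_num)).clm_apply continuous_const)
  have hXi := fun i => bern_coord_contDiff X hX i
  have hPi := fun i => bern_coord_contDiff P hP i
  have hyi := fun i => bern_coord_contDiff (fun y : EuclideanSpace ℝ (Fin n) => y) contDiff_id i
  have hPψ : ∀ j, (fun y => P y j) = fun y => fderiv ℝ ψ y (EuclideanSpace.single j 1) := by
    intro j; funext y
    rw [(hψf y).fderiv]; simp [EuclideanSpace.inner_single_right]
  have hPs : ∀ j, HasCompactSupport fun y => P y j := by
    intro j; rw [hPψ j]; exact hc.fderiv_apply (𝕜 := ℝ) _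
  have hQs' : ∀ i j, HasCompactSupport (Q i j) := by
    intro i j
    have : Q i j = fun y => fderiv ℝ (fun y => P y i) y (EuclideanSpace.single j 1) := by
      funext y; rw [bern_coord_fderiv P hP]
    rw [this]; exact (hPs i).fderiv_apply (𝕜 := ℝ) _
  set φ : EuclideanSpace ℝ (Fin n) → ℝ := fun y => (1/2) * ⟪y, X y⟫ - v y with hφ
  have hφ1 : ContDiff ℝ 1 φ := (contDiff_const.mul (contDiff_id.inner ℝ hX)).sub hv1
  have hφd : ∀ y j, fderiv ℝ φ y (EuclideanSpace.single j 1)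
      = (1/2) * (∑ i, y i * T i j y) - (1/2) * X y j := by
    intro y j
    have h1 : HasFDerivAt φ _ y :=
      (((hasFDerivAt_id y).inner ℝ (hX.differentiable (by norm_num) y).hasFDerivAt).const_mul
        (1/2 : ℝ)).sub (hvf y)
    rw [h1.fderiv]
    have h2 : ⟪y, fderiv ℝ X y (EuclideanSpace.single j 1)⟫ = ∑ i, y i * T i j y := by
      rw [PiLp.inner_apply]; simp [hT, mul_comm]
    simp [fderivInnerCLM_apply, EuclideanSpace.inner_single_right,
      EuclideanSpace.inner_single_left] at h2 ⊢
    rw [h2]; ring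
  have I1 : ∀ j, ∫ y, φ y * Q j j y
      = - ∫ y, ((1/2) * (∑ i, y i * T i j y) - (1/2) * X y j) * P y j := by
    intro j
    have := bern_ibp φ (fun y => P y j) hφ1 (hPi j) (hPs j) (EuclideanSpace.single j 1)
    simp only [hφd, bern_coord_fderiv P hP] at this
    exact this
  have I2 : ∀ j, ∫ y, X y j * P y j = - ∫ y, T j j y * ψ y := by
    intro j
    have := bern_ibp (fun y => X y j) ψ (hXi j) hψ1 hc (EuclideanSpace.single j 1)
    simp only [bern_coord_fderiv X hX] at this
    rw [← this]
    congr 1; funext y; rw [congrFun (hPψ j) y]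
  have hIntg : ∀ (f g : EuclideanSpace ℝ (Fin n) → ℝ), Continuous f → Continuous g →
      HasCompactSupport g → Integrable fun y => f y * g y := fun f g hf hg hc =>
    (hf.mul hg).integrable_of_hasCompactSupport hc.mul_left
  have hyPs : ∀ i j, HasCompactSupport fun y : EuclideanSpace ℝ (Fin n) => y i * P y j :=
    fun i j => (hPs j).mul_left
  have hyPc : ∀ i j, ContDiff ℝ 1 fun y : EuclideanSpace ℝ (Fin n) => y i * P y j :=
    fun i j => (hyi i).mul (hPi j)
  have hyd : ∀ i j k y, fderiv ℝ (fun y : EuclideanSpace ℝ (Fin n) => y i * P y j) y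
      (EuclideanSpace.single k 1) = (if i = k then P y j else 0) + y i * Q j k y := by
    intro i j k y
    have h1 := (((hyi i).differentiable (by norm_num) y).hasFDerivAt).mul
      (((hPi j).differentiable (by norm_num) y).hasFDerivAt)
    have h2 := bern_coord_fderiv (fun y : EuclideanSpace ℝ (Fin n) => y) contDiff_id i y
      (EuclideanSpace.single k 1)
    have h3 := bern_coord_fderiv P hP j y (EuclideanSpace.single k 1)
    have h4 : fderiv ℝ (fun y : EuclideanSpace ℝ (Fin n) => y i * P y j) y = _ := h1.fderiv
    rw [h4]
    simp only [_root_.add_apply, _root_.smul_apply, h2, h3]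
    simp [hQ]
    split_ifs <;> ring
  have I3 : ∀ i j, ∫ y, T i j y * (y i * P y j) = (∫ y, T j j y * (y i * P y i))
      - (∫ y, X y j * P y j) + (if i = j then ∫ y, X y j * P y j else 0) := by
    intro i j
    have a := bern_ibp (fun y => X y j) _ (hXi j) (hyPc i j) (hyPs i j) (EuclideanSpace.single i 1)
    have b := bern_ibp (fun y => X y j) _ (hXi j) (hyPc i i) (hyPs i i) (EuclideanSpace.single j 1)
    simp only [bern_coord_fderiv X hX, hyd] at a b
    have a' : ∫ y, T i j y * (y i * P y j) = - ∫ y, X y j * (P y j + y i * Q i j y) := by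
      simp only [hTs i j]
      rw [eq_neg_iff_add_eq_zero, add_comm, ← eq_neg_iff_add_eq_zero]
      rw [← a]
      congr 1; funext y; simp [hQs i j]
    have b' : ∫ y, T j j y * (y i * P y i)
        = - ∫ y, X y j * ((if i = j then P y i else 0) + y i * Q i j y) := by
      rw [b, neg_neg]
    rw [a', b']
    have e1 : ∫ y, X y j * (P y j + y i * Q i j y)
        = (∫ y, X y j * P y j) + ∫ y, X y j * (y i * Q i j y) := by
      rw [← integral_add (hIntg _ _ (hXi j).continuous (hPi j).continuous (hPs j))
        (hIntg (fun y => X y j) (fun y => y i * Q i j y) (hXi j).continuous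
          ((hyi i).continuous.mul (hQc i j)) (hQs' i j).mul_left)]
      congr 1; funext y; ring
    have e2 : ∫ y, X y j * ((if i = j then P y i else 0) + y i * Q i j y)
        = (if i = j then ∫ y, X y j * P y j else 0) + ∫ y, X y j * (y i * Q i j y) := by
      split_ifs with h
      · subst h; rw [e1]
      · simp
    rw [e1, e2]; ring
  have intφ : ∀ j, Integrable fun y => φ y * Q j j y :=
    fun j => hIntg _ _ hφ1.continuous (hQc j j) (hQs' j j)
  have intψ : ∀ j, Integrable fun y => T j j y * ψ y :=
    fun j => hIntg _ _ (hTc j j) hψ1.continuous hc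
  have intT : ∀ i j, Integrable fun y => T j j y * (y i * P y i) :=
    fun i j => hIntg _ _ (hTc j j) (hyPc i i).continuous (hyPs i i)
  have intT' : ∀ i j, Integrable fun y => T i j y * (y i * P y j) :=
    fun i j => hIntg _ _ (hTc i j) (hyPc i j).continuous (hyPs i j)
  have intX : ∀ j, Integrable fun y => X y j * P y j :=
    fun j => hIntg _ _ (hXi j).continuous (hPi j).continuous (hPs j)
  have J1 : ∀ j, ∫ y, ((1/2) * (∑ i, y i * T i j y) - (1/2) * X y j) * P y j
      = (1/2) * (∑ i, ∫ y, T i j y * (y i * P y j)) - (1/2) * ∫ y, X y j * P y j := by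
    intro j
    rw [← integral_finsetSum _ (fun i _ => intT' i j), ← integral_const_mul, ← integral_const_mul,
      ← integral_sub ((integrable_finsetSum _ (fun i _ => intT' i j)).const_mul _)
        ((intX j).const_mul _)]
    congr 1; funext y
    rw [sub_mul, mul_assoc, Finset.sum_mul, mul_assoc]
    congr 2
    exact Finset.sum_congr rfl fun i _ => by ring
  have J2 : ∀ j, ∫ y, (φ y * Q j j y + (1/2) * (T j j y * (n * ψ y + ⟪y, P y⟫)))
      = (∫ y, φ y * Q j j y) + (1/2) * (n * (∫ y, T j j y * ψ y)
        + ∑ i, ∫ y, T j j y * (y i * P y i)) := by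
    intro j
    have i1 : Integrable fun y => n * (T j j y * ψ y) := (intψ j).const_mul _
    have i2 : Integrable fun y => ∑ i, T j j y * (y i * P y i) :=
      (integrable_finsetSum _ (fun i _ => intT i j))
    have i3 : Integrable fun y => (1/2 : ℝ) * (n * (T j j y * ψ y) +
      ∑ i, T j j y * (y i * P y i)) := (i1.add i2).const_mul _
    rw [← integral_finsetSum _ (fun i _ => intT i j), ← integral_const_mul (n : ℝ),
      ← integral_add i1 i2, ← integral_const_mul, ← integral_add (intφ j) i3]
    congr 1; funext y
    have : ⟪y, P y⟫ = ∑ i, y i * P y i := by rw [PiLp.inner_apply]; simp [mul_comm]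
    rw [this, mul_add, ← Finset.mul_sum]; ring
  have J3 : ∀ j, Integrable fun y => (φ y * Q j j y + (1/2) * (T j j y * (n * ψ y + ⟪y, P y⟫))) := by
    intro j
    have i1 : Integrable fun y => n * (T j j y * ψ y) := (intψ j).const_mul _
    have i2 : Integrable fun y => ∑ i, T j j y * (y i * P y i) :=
      (integrable_finsetSum _ (fun i _ => intT i j))
    have i3 : Integrable fun y => (1/2 : ℝ) * (n * (T j j y * ψ y) +
      ∑ i, T j j y * (y i * P y i)) := (i1.add i2).const_mul _
    refine ((intφ j).add i3).congr (ae_of_all _ fun y => ?_)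
    have : ⟪y, P y⟫ = ∑ i, y i * P y i := by rw [PiLp.inner_apply]; simp [mul_comm]
    simp only [Pi.add_apply]
    rw [this, mul_add (T j j y), ← Finset.mul_sum]; ring
  have J4 : ∀ y, φ y * (∑ j, Q j j y) + (1/2) * ((∑ j, T j j y) * (n * ψ y + ⟪y, P y⟫))
      = ∑ j, (φ y * Q j j y + (1/2) * (T j j y * (n * ψ y + ⟪y, P y⟫))) := by
    intro y
    rw [Finset.sum_add_distrib, ← Finset.mul_sum, ← Finset.mul_sum, ← Finset.sum_mul]
  calc _ = ∫ y, ∑ j, (φ y * Q j j y + (1/2) * (T j j y * (n * ψ y + ⟪y, P y⟫))) := by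
        congr 1; funext y; exact J4 y
    _ = ∑ j, ((1/2) * ∫ y, X y j * P y j) * (1 + n - n - 1) := by
        rw [integral_finsetSum _ (fun j _ => J3 j)]
        refine Finset.sum_congr rfl fun j _ => ?_
        rw [J2 j, I1 j, J1 j]
        simp only [I3]
        rw [Finset.sum_add_distrib, Finset.sum_sub_distrib]
        simp only [Finset.sum_const, Finset.card_univ, Fintype.card_fin, nsmul_eq_mul,
          Finset.sum_ite_eq', Finset.mem_univ, if_true]
        linarith [I2 j, congrArg (fun z => (n:ℝ) * z) (I2 j)]
    _ = 0 := by simp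

theorem bern_scalar {n : ℕ} (ξ : EuclideanSpace ℝ (Fin n)) (F G : ℝ → ℝ) (F' G' : ℝ)
    (y : EuclideanSpace ℝ (Fin n)) (hF : HasDerivAt F F' ⟪ξ, y⟫) (hG : HasDerivAt G G' (‖y‖^2)) :
    HasFDerivAt (fun y => F ⟪ξ, y⟫ * G (‖y‖^2))
      ((F' * G (‖y‖^2)) • innerSL ℝ ξ + (2 * (F ⟪ξ, y⟫ * G')) • innerSL ℝ y) y := by
  have h1 : HasFDerivAt (fun y => F ⟪ξ, y⟫) (F' • innerSL ℝ ξ) y :=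
    hF.comp_hasFDerivAt y (innerSL ℝ ξ).hasFDerivAt
  have h2 : HasFDerivAt (fun y : EuclideanSpace ℝ (Fin n) => G (‖y‖^2))
      (G' • (2 • innerSL ℝ y)) y :=
    hG.comp_hasFDerivAt y (hasStrictFDerivAt_norm_sq y).hasFDerivAt
  have h3 := h1.mul h2
  refine h3.congr_fderiv ?_
  ext z
  simp
  ring

theorem bern_c1 (F F' : ℝ → ℝ) (h : ∀ t, HasDerivAt F (F' t) t) (hc : Continuous F') :
    ContDiff ℝ 1 F := by
  rw [contDiff_one_iff_deriv]
  refine ⟨fun t => (h t).differentiableAt, ?_⟩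
  rwa [show deriv F = F' from funext fun t => (h t).deriv]

open MeasureTheory in
theorem bern_weak0 {n : ℕ} (v : EuclideanSpace ℝ (Fin n) → ℝ)
    (X : EuclideanSpace ℝ (Fin n) → EuclideanSpace ℝ (Fin n))
    (hv : ∀ y, HasGradientAt v (X y) y) (hX : ContDiff ℝ 1 X)
    (heq : ∀ y, √2 * (∑ j, fderiv ℝ X y (EuclideanSpace.single j 1) j) = (1/2) * ⟪y, X y⟫ - v y)
    (ξ : EuclideanSpace ℝ (Fin n)) (A A' A'' B B' B'' : ℝ → ℝ)
    (hA : ∀ t, HasDerivAt A (A' t) t) (hA' : ∀ t, HasDerivAt A' (A'' t) t) (hA'' : Continuous A'')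
    (hB : ∀ t, HasDerivAt B (B' t) t) (hB' : ∀ t, HasDerivAt B' (B'' t) t) (hB'' : Continuous B'')
    (a : ℝ) (ha : ∀ s, a ≤ s → B s = 0) :
    ∫ y, ((1/2) * ⟪y, X y⟫ - v y) * (
      √2 * (‖ξ‖^2 * (A'' ⟪ξ, y⟫ * B (‖y‖^2)) + 4 * (A' ⟪ξ, y⟫ * B' (‖y‖^2)) * ⟪ξ, y⟫
        + A ⟪ξ, y⟫ * (2 * n * B' (‖y‖^2) + 4 * ‖y‖^2 * B'' (‖y‖^2)))
      + (1/2) * (n * (A ⟪ξ, y⟫ * B (‖y‖^2)) + A' ⟪ξ, y⟫ * B (‖y‖^2) * ⟪ξ, y⟫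
        + 2 * (A ⟪ξ, y⟫ * B' (‖y‖^2)) * ‖y‖^2)) = 0 := by
  set ψ : EuclideanSpace ℝ (Fin n) → ℝ := fun y => A ⟪ξ, y⟫ * B (‖y‖^2) with hψ
  set P : EuclideanSpace ℝ (Fin n) → EuclideanSpace ℝ (Fin n) := fun y =>
    (A' ⟪ξ, y⟫ * B (‖y‖^2)) • ξ + (2 * (A ⟪ξ, y⟫ * B' (‖y‖^2))) • y with hP
  have cA := bern_c1 _ _ hA (continuous_iff_continuousAt.2 fun t => (hA' t).continuousAt)
  have cA' := bern_c1 _ _ hA' hA''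
  have cB := bern_c1 _ _ hB (continuous_iff_continuousAt.2 fun t => (hB' t).continuousAt)
  have cB' := bern_c1 _ _ hB' hB''
  have cl : ContDiff ℝ 1 (fun y : EuclideanSpace ℝ (Fin n) => ⟪ξ, y⟫) := contDiff_const.inner ℝ contDiff_id
  have cs : ContDiff ℝ 1 (fun y : EuclideanSpace ℝ (Fin n) => ‖y‖^2) := contDiff_norm_sq ℝ
  have hPc : ContDiff ℝ 1 P :=
    (((cA'.comp cl).mul (cB.comp cs)).smul contDiff_const).add
      ((contDiff_const.mul ((cA.comp cl).mul (cB'.comp cs))).smul contDiff_id)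
  have hg : ∀ y, HasGradientAt ψ (P y) y := by
    intro y
    rw [hasGradientAt_iff_hasFDerivAt]
    refine (bern_scalar ξ A B _ _ y (hA _) (hB _)).congr_fderiv ?_
    ext z
    simp [hP, inner_add_left, inner_smul_left]
  have hc : HasCompactSupport ψ := by
    apply HasCompactSupport.of_support_subset_isCompact
      (isCompact_closedBall (0 : EuclideanSpace ℝ (Fin n)) (√ (max a 0)))
    intro y hy
    by_contra h
    apply hy
    have h1 : √ (max a 0) < ‖y‖ := by simpa using h
    have h2 : max a 0 < ‖y‖^2 := (Real.sqrt_lt (le_max_right _ _) (norm_nonneg _)).1 h1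
    simp [hψ, ha _ ((le_max_left _ _).trans h2.le)]
  have key := bern_identity v X hv hX ψ P hg hPc hc
  have hlap : ∀ y, (∑ j, fderiv ℝ P y (EuclideanSpace.single j 1) j)
      = ‖ξ‖^2 * (A'' ⟪ξ, y⟫ * B (‖y‖^2)) + 4 * (A' ⟪ξ, y⟫ * B' (‖y‖^2)) * ⟪ξ, y⟫
        + A ⟪ξ, y⟫ * (2 * n * B' (‖y‖^2) + 4 * ‖y‖^2 * B'' (‖y‖^2)) := by
    intro y
    have h1 := bern_scalar ξ A' B _ _ y (hA' _) (hB _)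
    have h2 := bern_scalar ξ A B' _ _ y (hA _) (hB' _)
    have h3 : HasFDerivAt P _ y :=
      (h1.smul_const ξ).add ((h2.const_mul 2).smul (hasFDerivAt_id y))
    rw [h3.fderiv]
    have e1 : ⟪ξ, y⟫ = ∑ j, ξ j * y j := by rw [PiLp.inner_apply]; simp [mul_comm]
    have e2 : ‖ξ‖^2 = ∑ j, ξ j * ξ j := by
      rw [← real_inner_self_eq_norm_sq, PiLp.inner_apply]; simp [pow_two]
    have e3 : ‖y‖^2 = ∑ j, y j * y j := by
      rw [← real_inner_self_eq_norm_sq, PiLp.inner_apply]; simp [pow_two]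
    have step : ∀ j, (((A'' ⟪ξ, y⟫ * B (‖y‖^2)) * (ξ j * ξ j)
        + (4 * (A' ⟪ξ, y⟫ * B' (‖y‖^2))) * (ξ j * y j)
        + (4 * (A ⟪ξ, y⟫ * B'' (‖y‖^2))) * (y j * y j)) + 2 * (A ⟪ξ, y⟫ * B' (‖y‖^2))) =
        (((A'' ⟪ξ, y⟫ * B (‖y‖ ^ 2)) • (innerSL ℝ) ξ + (2 * (A' ⟪ξ, y⟫ * B' (‖y‖ ^ 2))) • (innerSL ℝ) y).smulRight ξ +
          ((2 * (A ⟪ξ, y⟫ * B' (‖y‖ ^ 2))) • ContinuousLinearMap.id ℝ (EuclideanSpace ℝ (Fin n)) +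
      ((2:ℝ) • ((A' ⟪ξ, y⟫ * B' (‖y‖ ^ 2)) • (innerSL ℝ) ξ + (2 * (A ⟪ξ, y⟫ * B'' (‖y‖ ^ 2))) • (innerSL ℝ) y)).smulRight y)) (EuclideanSpace.single j 1) j := by
      intro j
      simp [EuclideanSpace.inner_single_right]
      ring
    refine (Finset.sum_congr rfl fun j _ => (step j).symm).trans ?_
    rw [Finset.sum_add_distrib, Finset.sum_add_distrib, Finset.sum_add_distrib,
      ← Finset.mul_sum, ← Finset.mul_sum, ← Finset.mul_sum, ← e1, ← e2, ← e3]
    simp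
    ring
  have hdiv : ∀ y, ⟪y, P y⟫ = A' ⟪ξ, y⟫ * B (‖y‖^2) * ⟪ξ, y⟫
        + 2 * (A ⟪ξ, y⟫ * B' (‖y‖^2)) * ‖y‖^2 := by
    intro y
    simp only [hP, inner_add_right, inner_smul_right, real_inner_self_eq_norm_sq,
      real_inner_comm ξ y]
  have := congrArg (fun z => √2 * z) key
  simp only [mul_zero] at this
  rw [← integral_const_mul] at this
  rw [← this]
  congr 1; funext y
  rw [hlap, hdiv]
  have h5 := heq y
  simp only [hψ]
  linear_combination (-(1/2) * (n * (A ⟪ξ, y⟫ * B (‖y‖^2)) + A' ⟪ξ, y⟫ * B (‖y‖^2) * ⟪ξ, y⟫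
        + 2 * (A ⟪ξ, y⟫ * B' (‖y‖^2)) * ‖y‖^2)) * h5

open MeasureTheory in
theorem bern_weak {n : ℕ} (v : EuclideanSpace ℝ (Fin n) → ℝ)
    (X : EuclideanSpace ℝ (Fin n) → EuclideanSpace ℝ (Fin n))
    (hv : ∀ y, HasGradientAt v (X y) y) (hX : ContDiff ℝ 1 X)
    (heq : ∀ y, √2 * (∑ j, fderiv ℝ X y (EuclideanSpace.single j 1) j) = (1/2) * ⟪y, X y⟫ - v y)
    (ξ : EuclideanSpace ℝ (Fin n)) (A A' A'' K K' K'' : ℝ → ℝ)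
    (hA : ∀ t, HasDerivAt A (A' t) t) (hA' : ∀ t, HasDerivAt A' (A'' t) t) (hA'' : Continuous A'')
    (hK : ∀ t, HasDerivAt K (K' t) t) (hK' : ∀ t, HasDerivAt K' (K'' t) t) (hK'' : Continuous K'')
    (a : ℝ) (ha : ∀ s, a ≤ s → K s = 0) :
    ∫ y, (((1/2) * ⟪y, X y⟫ - v y) * Real.exp (-(√2 / 8) * ‖y‖^2)) * (
      √2 * ‖ξ‖^2 * A'' ⟪ξ, y⟫ * K (‖y‖^2)
      + A' ⟪ξ, y⟫ * ⟪ξ, y⟫ * (4 * √2 * K' (‖y‖^2) - (1/2) * K (‖y‖^2))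
      + A ⟪ξ, y⟫ * ((2 * √2 * n - ‖y‖^2) * K' (‖y‖^2) + 4 * √2 * ‖y‖^2 * K'' (‖y‖^2))) = 0 := by
  have hρ : ∀ t, HasDerivAt (fun s => Real.exp (-(√2 / 8) * s))
      (Real.exp (-(√2 / 8) * t) * (-(√2/8))) t := fun t => by
    simpa using ((hasDerivAt_id t).const_mul (-(√2 / 8))).exp
  have hq : √2 * √2 = 2 := Real.mul_self_sqrt (by norm_num)
  have key := bern_weak0 v X hv hX heq ξ A A' A'' (fun s => Real.exp (-(√2 / 8) * s) * K s)
    (fun s => Real.exp (-(√2 / 8) * s) * (K' s - √2/8 * K s))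
    (fun s => Real.exp (-(√2 / 8) * s) * (K'' s - 2 * (√2/8) * K' s + (√2/8)^2 * K s))
    hA hA' hA''
    (fun t => by
      refine ((hρ t).mul (hK t)).congr_deriv ?_
      ring)
    (fun t => by
      refine ((hρ t).mul ((hK' t).sub ((hK t).const_mul (√2/8)))).congr_deriv ?_
      simp only [Pi.sub_apply]
      ring)
    (by
      have c1 : Continuous K := continuous_iff_continuousAt.2 fun t => (hK t).continuousAt
      have c2 : Continuous K' := continuous_iff_continuousAt.2 fun t => (hK' t).continuousAt
      fun_prop) a
    (fun s hs => by simp [ha s hs])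
  rw [← key]
  congr 1; funext y
  generalize A ⟪ξ, y⟫ = a0
  generalize A' ⟪ξ, y⟫ = a1
  generalize A'' ⟪ξ, y⟫ = a2
  generalize K (‖y‖^2) = k0
  generalize K' (‖y‖^2) = k1
  generalize K'' (‖y‖^2) = k2
  generalize Real.exp (-(√2 / 8) * ‖y‖^2) = r
  generalize (1/2) * ⟪y, X y⟫ - v y = f
  generalize ⟪ξ, y⟫ = l
  generalize ‖y‖^2 = s
  generalize √2 = q at *
  have h2 : q^2 = 2 := by rw [← hq]; ring
  have h3 : q^3 = 2 * q := by rw [← h2]; ring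
  ring_nf
  simp only [h2, h3]
  ring

/-- Weak form of the (conjugated) Ornstein-Uhlenbeck equation. -/
def BernWeak (n : ℕ) (g : EuclideanSpace ℝ (Fin n) → ℝ) : Prop :=
  ∀ (ξ : EuclideanSpace ℝ (Fin n)) (A A' A'' K K' K'' : ℝ → ℝ),
    (∀ t, HasDerivAt A (A' t) t) → (∀ t, HasDerivAt A' (A'' t) t) → Continuous A'' →
    (∀ t, HasDerivAt K (K' t) t) → (∀ t, HasDerivAt K' (K'' t) t) → Continuous K'' →
    ∀ a : ℝ, (∀ s, a ≤ s → K s = 0) →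
    ∫ y, g y * (
      √2 * ‖ξ‖^2 * A'' ⟪ξ, y⟫ * K (‖y‖^2)
      + A' ⟪ξ, y⟫ * ⟪ξ, y⟫ * (4 * √2 * K' (‖y‖^2) - (1/2) * K (‖y‖^2))
      + A ⟪ξ, y⟫ * ((2 * √2 * n - ‖y‖^2) * K' (‖y‖^2) + 4 * √2 * ‖y‖^2 * K'' (‖y‖^2))) = 0

theorem bern_pospow (m : ℕ) (x : ℝ) :
    HasDerivAt (fun x : ℝ => max x 0 ^ (m+2)) ((m+2) * max x 0 ^ (m+1)) x := by
  rcases lt_trichotomy x 0 with h | h | h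
  · have : (fun x : ℝ => max x 0 ^ (m+2)) =ᶠ[nhds x] fun _ => 0 := by
      filter_upwards [Iio_mem_nhds h] with y hy
      simp [max_eq_right (Set.mem_Iio.1 hy).le]
    rw [max_eq_right h.le]
    simpa using (hasDerivAt_const x (0:ℝ)).congr_of_eventuallyEq this
  · subst h
    have h1 : (fun x : ℝ => max x 0 ^ (m+2)) =O[nhds 0] fun x => ‖x - 0‖ ^ (m+2) := by
      apply Asymptotics.IsBigO.of_bound 1
      filter_upwards with y
      rw [norm_pow, norm_pow, norm_norm, one_mul, sub_zero]
      gcongr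
      rw [Real.norm_eq_abs, Real.norm_eq_abs, abs_of_nonneg (le_max_right _ _)]
      exact max_le (le_abs_self _) (abs_nonneg _)
    have h2 := h1.hasFDerivAt (𝕜 := ℝ) (by omega)
    have h3 := h2.hasDerivAt
    simpa using h3
  · have : (fun x : ℝ => max x 0 ^ (m+2)) =ᶠ[nhds x] fun x => x ^ (m+2) := by
      filter_upwards [Ioi_mem_nhds h] with y hy
      simp only [max_eq_left (Set.mem_Ioi.1 hy).le]
    rw [max_eq_left h.le]
    have := (hasDerivAt_pow (m+2) x).congr_of_eventuallyEq this
    simpa using this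

theorem bern_cut (a : ℝ) (m : ℕ) (s : ℝ) :
    HasDerivAt (fun s : ℝ => max (1 - s / a) 0 ^ (m+2))
      (-((m+2) / a) * max (1 - s / a) 0 ^ (m+1)) s := by
  have h1 : HasDerivAt (fun s : ℝ => 1 - s / a) (-(1/a)) s := by
    simpa using ((hasDerivAt_id s).div_const a).const_sub 1
  have := (bern_pospow m (1 - s/a)).comp s h1
  refine this.congr_deriv ?_
  ring

/-- The weak identity with the concrete cut-off. -/
theorem BernWeak.cut {n : ℕ} {g : EuclideanSpace ℝ (Fin n) → ℝ} (hW : BernWeak n g)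
    (ξ : EuclideanSpace ℝ (Fin n)) (A A' A'' : ℝ → ℝ)
    (hA : ∀ t, HasDerivAt A (A' t) t) (hA' : ∀ t, HasDerivAt A' (A'' t) t) (hA'' : Continuous A'')
    (a : ℝ) (ha : 0 < a) :
    ∫ y, g y * (
      √2 * ‖ξ‖^2 * A'' ⟪ξ, y⟫ * max (1 - ‖y‖^2 / a) 0 ^ 3
      + A' ⟪ξ, y⟫ * ⟪ξ, y⟫ * (4 * √2 * (-(3 / a) * max (1 - ‖y‖^2 / a) 0 ^ 2)
        - (1/2) * max (1 - ‖y‖^2 / a) 0 ^ 3)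
      + A ⟪ξ, y⟫ * ((2 * √2 * n - ‖y‖^2) * (-(3 / a) * max (1 - ‖y‖^2 / a) 0 ^ 2)
        + 4 * √2 * ‖y‖^2 * (6 / a^2 * max (1 - ‖y‖^2 / a) 0))) = 0 := by
  refine hW ξ A A' A'' (fun s => max (1 - s / a) 0 ^ 3)
    (fun s => -(3/a) * max (1 - s / a) 0 ^ 2) (fun s => 6 / a^2 * max (1 - s / a) 0)
    hA hA' hA'' ?_ ?_ ?_ a ?_
  · intro t
    refine (bern_cut a 1 t).congr_deriv ?_
    norm_num
  · intro t
    refine ((bern_cut a 0 t).const_mul (-(3/a))).congr_deriv ?_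
    simp
    field_simp
    ring
  · fun_prop
  · intro s hs
    have : 1 - s / a ≤ 0 := by
      rw [sub_nonpos, le_div_iff₀ ha]; linarith
    simp [max_eq_right this]

open MeasureTheory in
theorem BernWeak.integrable {n : ℕ} (hn : 1 ≤ n) {g : EuclideanSpace ℝ (Fin n) → ℝ}
    (hW : BernWeak n g) (hg : Continuous g) (hp : ∀ y, 0 < g y) :
    Integrable fun y => (1 + ‖y‖^2) * g y := by
  set b : ℝ := 2 * √2 * n with hb
  have hq1 : (1:ℝ) ≤ √2 := by rw [Real.one_le_sqrt]; norm_num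
  have hb1 : 1 ≤ b := by
    have : (1:ℝ) ≤ n := by exact_mod_cast hn
    rw [hb]; nlinarith
  have hc : Continuous fun y => (1 + ‖y‖^2) * g y := by fun_prop
  have hcov : AECover (volume : Measure (EuclideanSpace ℝ (Fin n))) atTop
      (fun i : ℕ => Metric.closedBall (0 : EuclideanSpace ℝ (Fin n)) (i : ℝ)) :=
    aecover_closedBall tendsto_natCast_atTop_atTop
  have hB : MeasurableSet (Metric.closedBall (0 : EuclideanSpace ℝ (Fin n)) (√(2*b))) :=
    Metric.isClosed_closedBall.measurableSet
  have hI0 : IntegrableOn g (Metric.closedBall (0 : EuclideanSpace ℝ (Fin n)) (√(2*b))) :=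
    hg.continuousOn.integrableOn_compact (isCompact_closedBall _ _)
  refine hcov.integrable_of_integral_bounded_of_nonneg_ae
    ((1 + 18 * b) * ∫ y in Metric.closedBall (0 : EuclideanSpace ℝ (Fin n)) (√(2*b)), g y)
    (fun i => hc.continuousOn.integrableOn_compact (isCompact_closedBall _ _))
    (ae_of_all _ fun y => mul_nonneg (by positivity) (hp y).le)
    (Eventually.of_forall fun i => ?_)
  set a : ℝ := 2 * ((i:ℝ)^2 + 1) with ha
  have ha0 : 0 < a := by positivity
  have key := hW.cut 0 (fun _ => 1) (fun _ => 0) (fun _ => 0) (fun t => hasDerivAt_const t _)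
    (fun t => hasDerivAt_const t _) continuous_const a ha0
  simp only [mul_zero, zero_mul, zero_add, one_mul] at key
  rw [← hb] at key
  set R : EuclideanSpace ℝ (Fin n) → ℝ := fun y =>
    g y * ((b - ‖y‖^2) * (-(3 / a) * max (1 - ‖y‖^2 / a) 0 ^ 2)
        + 4 * √2 * ‖y‖^2 * (6 / a^2 * max (1 - ‖y‖^2 / a) 0)) with hR
  have hRc : Continuous R := by fun_prop
  have hRi : Integrable R := by
    apply hRc.integrable_of_hasCompactSupport
    apply HasCompactSupport.of_support_subset_isCompact
      (isCompact_closedBall (0 : EuclideanSpace ℝ (Fin n)) (√ a))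
    intro y hy
    by_contra h
    apply hy
    have h1 : √ a < ‖y‖ := by simpa using h
    have h2 : a < ‖y‖^2 := (Real.sqrt_lt ha0.le (norm_nonneg _)).1 h1
    have : 1 - ‖y‖^2 / a ≤ 0 := by
      rw [sub_nonpos, le_div_iff₀ ha0]; linarith
    simp [hR, max_eq_right this]
  have hJ : Integrable (Set.indicator (Metric.closedBall (0 : EuclideanSpace ℝ (Fin n)) (√(2*b))) g) :=
    hI0.integrable_indicator hB
  rw [← integral_indicator Metric.isClosed_closedBall.measurableSet]
  have hle : ∀ y, Set.indicator (Metric.closedBall (0 : EuclideanSpace ℝ (Fin n)) (i:ℝ))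
      (fun y => (1 + ‖y‖^2) * g y) y ≤
      (1 + 18 * b) * Set.indicator (Metric.closedBall (0 : EuclideanSpace ℝ (Fin n)) (√(2*b))) g y
        + (16 * a / 3) * R y := by
    intro y
    set κ := max (1 - ‖y‖^2 / a) 0 with hκ
    have hκ0 : 0 ≤ κ := le_max_right _ _
    have hκ1 : κ ≤ 1 := max_le (by have : 0 ≤ ‖y‖^2/a := by positivity
                                   linarith) zero_le_one
    have hs : 0 ≤ ‖y‖^2 := by positivity
    have hR1 : (16 * a / 3) * R y = g y * (16 * (‖y‖^2 - b) * κ^2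
        + 128 * √2 / a * ‖y‖^2 * κ) := by
      simp only [hR, ← hκ]; field_simp; ring
    have hR2 : g y * (16 * (‖y‖^2 - b) * κ^2) ≤ (16 * a / 3) * R y := by
      rw [hR1]; apply mul_le_mul_of_nonneg_left _ (hp y).le
      have : 0 ≤ 128 * √2 / a * ‖y‖^2 * κ := by positivity
      linarith
    refine le_trans ?_ (add_le_add le_rfl hR2)
    by_cases h2 : ‖y‖^2 ≤ 2 * b
    · have hm : y ∈ Metric.closedBall (0 : EuclideanSpace ℝ (Fin n)) (√(2*b)) := by
        simp only [mem_closedBall_zero_iff]; exact Real.le_sqrt_of_sq_le h2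
      rw [Set.indicator_of_mem hm]
      have h3 : Set.indicator (Metric.closedBall (0 : EuclideanSpace ℝ (Fin n)) (i:ℝ))
        (fun y => (1 + ‖y‖^2) * g y) y ≤ (1 + ‖y‖^2) * g y := by
        apply Set.indicator_le_self' 
        intro z _
        exact mul_nonneg (by positivity) (hp z).le
      refine h3.trans ?_
      have h4 : 1 + ‖y‖^2 ≤ (1 + 18 * b) + 16 * (‖y‖^2 - b) * κ^2 := by
        have : κ^2 ≤ 1 := by nlinarith
        nlinarith [mul_nonneg hs (sq_nonneg κ)]
      nlinarith [mul_le_mul_of_nonneg_right h4 (hp y).le]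
    · push Not at h2
      have hm : y ∉ Metric.closedBall (0 : EuclideanSpace ℝ (Fin n)) (√(2*b)) := by
        simp only [mem_closedBall_zero_iff, not_le]
        rw [Real.sqrt_lt (by linarith) (norm_nonneg _)]; exact h2
      rw [Set.indicator_of_notMem hm, mul_zero, zero_add]
      by_cases h5 : y ∈ Metric.closedBall (0 : EuclideanSpace ℝ (Fin n)) (i:ℝ)
      · rw [Set.indicator_of_mem h5]
        have h6 : ‖y‖^2 ≤ (i:ℝ)^2 := by
          have : ‖y‖ ≤ i := by simpa using h5
          gcongr
        have h7 : 1/2 ≤ κ := by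
          refine le_trans ?_ (le_max_left _ _)
          have : ‖y‖^2 / a ≤ 1/2 := by rw [div_le_iff₀ ha0]; linarith
          linarith
        have h8 : 1/4 ≤ κ^2 := by nlinarith
        have h9 : 1 + ‖y‖^2 ≤ 16 * (‖y‖^2 - b) * κ^2 := by nlinarith
        nlinarith [mul_le_mul_of_nonneg_right h9 (hp y).le]
      · rw [Set.indicator_of_notMem h5]
        apply mul_nonneg (hp y).le
        have : 0 ≤ ‖y‖^2 - b := by linarith
        positivity
  calc _ ≤ ∫ y, ((1 + 18 * b) * Set.indicator (Metric.closedBall (0 : EuclideanSpace ℝ (Fin n)) (√(2*b))) g y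
        + (16 * a / 3) * R y) := by
        apply integral_mono _ _ hle
        · exact (hc.continuousOn.integrableOn_compact
            (isCompact_closedBall _ _)).integrable_indicator Metric.isClosed_closedBall.measurableSet
        · exact (hJ.const_mul _).add (hRi.const_mul _)
    _ = _ := by
        rw [integral_add (hJ.const_mul _) (hRi.const_mul _), integral_const_mul, integral_const_mul,
          key, integral_indicator hB]
        simp

theorem bern_bound (c s l X r κ a N : ℝ) (hc : |c| ≤ 1) (hs : |s| ≤ 1) (hX : 0 ≤ X) (hr : 0 ≤ r)
    (hN : 0 ≤ N)
    (hl : |l| ≤ X * r) (hκ : 0 ≤ κ) (hκ1 : κ ≤ 1) (ha : 1 ≤ a) :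
    |√2 * X^2 * (-c) * κ^3 + (-s) * l * (4 * √2 * (-(3 / a) * κ^2) - (1/2) * κ^3)
      + c * ((2 * √2 * N - r^2) * (-(3 / a) * κ^2) + 4 * √2 * r^2 * (6 / a^2 * κ))| ≤
    (√2 * X^2 + X * (12 * √2 + 1/2) + 6 * √2 * N + 3 + 24 * √2) * (1 + r^2) := by
  have hq : (0:ℝ) ≤ √2 := Real.sqrt_nonneg _
  have p0 : 0 ≤ κ^3 := by positivity
  have p1 : κ^3 ≤ 1 := pow_le_one₀ hκ hκ1
  have i0 : 0 ≤ 3 / a := by positivity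
  have i1 : 3 / a ≤ 3 := by rw [div_le_iff₀ (by linarith)]; linarith
  have j0 : 0 ≤ 6 / a^2 := by positivity
  have j1 : 6 / a^2 ≤ 6 := by rw [div_le_iff₀ (by positivity)]; nlinarith
  have k2 : κ^2 ≤ 1 := pow_le_one₀ hκ hκ1
  have q0 : 0 ≤ 3 / a * κ^2 := by positivity
  have q1 : 3 / a * κ^2 ≤ 3 := by
    calc 3 / a * κ^2 ≤ 3 * 1 := by gcongr
      _ = 3 := by norm_num
  have z0 : 0 ≤ 6 / a^2 * κ := by positivity
  have z1 : 6 / a^2 * κ ≤ 6 := by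
    calc 6 / a^2 * κ ≤ 6 * 1 := by gcongr
      _ = 6 := by norm_num
  have t1 : |√2 * X^2 * (-c) * κ^3| ≤ √2 * X^2 := by
    rw [abs_mul, abs_mul, abs_neg, abs_of_nonneg p0, abs_of_nonneg (by positivity : 0 ≤ √2 * X^2)]
    calc √2 * X^2 * |c| * κ^3 ≤ √2 * X^2 * 1 * 1 := by gcongr
      _ = _ := by ring
  have t2 : |(-s) * l * (4 * √2 * (-(3 / a) * κ^2) - (1/2) * κ^3)| ≤ X * r * (12 * √2 + 1/2) := by
    rw [abs_mul, abs_mul, abs_neg]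
    have : |4 * √2 * (-(3 / a) * κ^2) - (1/2) * κ^3| ≤ 12 * √2 + 1/2 := by
      rw [abs_le]
      constructor <;> nlinarith [mul_nonneg hq q0, mul_le_mul_of_nonneg_left q1 hq]
    calc |s| * |l| * _ ≤ 1 * (X * r) * (12 * √2 + 1/2) := by gcongr
      _ = _ := by ring
  have t3 : |c * ((2 * √2 * N - r^2) * (-(3 / a) * κ^2) + 4 * √2 * r^2 * (6 / a^2 * κ))| ≤
      6 * √2 * N + 3 * r^2 + 24 * √2 * r^2 := by
    rw [abs_mul]
    have e1 : |(2 * √2 * N - r^2) * (-(3 / a) * κ^2)| ≤ (2 * √2 * N + r^2) * 3 := by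
      rw [abs_mul, neg_mul, abs_neg, abs_of_nonneg q0]
      have : |2 * √2 * N - r^2| ≤ 2 * √2 * N + r^2 := by
        have : 0 ≤ 2 * √2 * N := by positivity
        rw [abs_le]; constructor <;> nlinarith
      gcongr
    have e2 : |4 * √2 * r^2 * (6 / a^2 * κ)| ≤ 4 * √2 * r^2 * 6 := by
      rw [abs_of_nonneg (by positivity)]
      gcongr
    have e3 := abs_add_le ((2 * √2 * N - r^2) * (-(3 / a) * κ^2)) (4 * √2 * r^2 * (6 / a^2 * κ))
    calc |c| * _ ≤ 1 * ((2 * √2 * N + r^2) * 3 + 4 * √2 * r^2 * 6) := by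
          gcongr; linarith
      _ = _ := by ring
  have hr1 : r ≤ 1 + r^2 := by nlinarith [sq_nonneg (r - 1)]
  have t4 := abs_add_three (√2 * X^2 * (-c) * κ^3)
    ((-s) * l * (4 * √2 * (-(3 / a) * κ^2) - (1/2) * κ^3))
    (c * ((2 * √2 * N - r^2) * (-(3 / a) * κ^2) + 4 * √2 * r^2 * (6 / a^2 * κ)))
  have t5 : X * r * (12 * √2 + 1/2) ≤ X * (1 + r^2) * (12 * √2 + 1/2) := by gcongr
  have u1 : 0 ≤ √2 * X^2 * r^2 := by positivity
  have u2 : 0 ≤ 6 * √2 * N * r^2 := by positivity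
  nlinarith

open MeasureTheory in
theorem BernWeak.limit {n : ℕ} (hn : 1 ≤ n) {g : EuclideanSpace ℝ (Fin n) → ℝ}
    (hW : BernWeak n g) (hg : Continuous g) (hp : ∀ y, 0 < g y)
    (ξ : EuclideanSpace ℝ (Fin n)) (θ : ℝ) :
    ∫ y, g y * (-√2 * ‖ξ‖^2 * Real.cos (⟪ξ, y⟫ + θ) + (1/2) * ⟪ξ, y⟫ * Real.sin (⟪ξ, y⟫ + θ)) = 0 := by
  have hI := hW.integrable hn hg hp
  set C := √2 * ‖ξ‖^2 + ‖ξ‖ * (12 * √2 + 1/2) + 6 * √2 * n + 3 + 24 * √2 with hC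
  set F : ℕ → EuclideanSpace ℝ (Fin n) → ℝ := fun m y => g y * (
      √2 * ‖ξ‖^2 * (-Real.cos (⟪ξ, y⟫ + θ)) * max (1 - ‖y‖^2 / ((m:ℝ)+1)) 0 ^ 3
      + (-Real.sin (⟪ξ, y⟫ + θ)) * ⟪ξ, y⟫ *
        (4 * √2 * (-(3 / ((m:ℝ)+1)) * max (1 - ‖y‖^2 / ((m:ℝ)+1)) 0 ^ 2)
        - (1/2) * max (1 - ‖y‖^2 / ((m:ℝ)+1)) 0 ^ 3)
      + Real.cos (⟪ξ, y⟫ + θ) * ((2 * √2 * n - ‖y‖^2) *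
        (-(3 / ((m:ℝ)+1)) * max (1 - ‖y‖^2 / ((m:ℝ)+1)) 0 ^ 2)
        + 4 * √2 * ‖y‖^2 * (6 / ((m:ℝ)+1)^2 * max (1 - ‖y‖^2 / ((m:ℝ)+1)) 0))) with hF
  have hF0 : ∀ m, ∫ y, F m y = 0 := by
    intro m
    refine hW.cut ξ (fun t => Real.cos (t + θ)) (fun t => -Real.sin (t + θ))
      (fun t => -Real.cos (t + θ)) ?_ ?_ ?_ ((m:ℝ)+1) (by positivity)
    · intro t
      simpa using ((hasDerivAt_id t).add_const θ).cos
    · intro t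
      exact (((hasDerivAt_id t).add_const θ).sin.neg).congr_deriv (by simp)
    · fun_prop
  have hlim : Tendsto (fun m => ∫ y, F m y) atTop (nhds (∫ y, g y * (-√2 * ‖ξ‖^2 * Real.cos (⟪ξ, y⟫ + θ) + (1/2) * ⟪ξ, y⟫ * Real.sin (⟪ξ, y⟫ + θ)))) := by
    apply tendsto_integral_of_dominated_convergence (fun y => C * ((1 + ‖y‖^2) * g y))
    · intro m
      apply Continuous.aestronglyMeasurable
      simp only [hF]
      fun_prop
    · exact hI.const_mul C
    · intro m
      refine ae_of_all _ fun y => ?_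
      simp only [hF]
      rw [norm_mul, Real.norm_eq_abs, Real.norm_eq_abs, abs_of_pos (hp y)]
      have := bern_bound (Real.cos (⟪ξ, y⟫ + θ)) (Real.sin (⟪ξ, y⟫ + θ)) ⟪ξ, y⟫ ‖ξ‖ ‖y‖
        (max (1 - ‖y‖^2 / ((m:ℝ)+1)) 0) ((m:ℝ)+1) n (Real.abs_cos_le_one _) (Real.abs_sin_le_one _)
        (norm_nonneg _) (norm_nonneg _) (by positivity) (abs_real_inner_le_norm _ _)
        (le_max_right _ _) (max_le (by
          have : 0 ≤ ‖y‖^2 / ((m:ℝ)+1) := by positivity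
          linarith) zero_le_one) (by
          have : (0:ℝ) ≤ m := by positivity
          linarith)
      have h2 := mul_le_mul_of_nonneg_left this (hp y).le
      refine h2.trans (le_of_eq ?_)
      rw [hC]; ring
    · refine ae_of_all _ fun y => ?_
      have hP : Continuous fun t : ℝ => g y * (
        √2 * ‖ξ‖^2 * (-Real.cos (⟪ξ, y⟫ + θ)) * max (1 - ‖y‖^2 * t) 0 ^ 3
        + (-Real.sin (⟪ξ, y⟫ + θ)) * ⟪ξ, y⟫ *
          (4 * √2 * (-(3 * t) * max (1 - ‖y‖^2 * t) 0 ^ 2)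
          - (1/2) * max (1 - ‖y‖^2 * t) 0 ^ 3)
        + Real.cos (⟪ξ, y⟫ + θ) * ((2 * √2 * n - ‖y‖^2) *
          (-(3 * t) * max (1 - ‖y‖^2 * t) 0 ^ 2)
          + 4 * √2 * ‖y‖^2 * (6 * t^2 * max (1 - ‖y‖^2 * t) 0))) := by fun_prop
      have h1 : Tendsto (fun m : ℕ => ((m:ℝ)+1)⁻¹) atTop (nhds 0) := by
        simpa using tendsto_one_div_add_atTop_nhds_zero_nat (𝕜 := ℝ)
      have h2 := (hP.tendsto 0).comp h1
      convert h2 using 1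
      · funext m
        simp only [hF, Function.comp, div_eq_mul_inv, inv_pow]
      · simp
        ring_nf
        simp
  simp only [hF0] at hlim
  exact (tendsto_nhds_unique hlim tendsto_const_nhds)

open MeasureTheory in
theorem BernWeak.fourier {n : ℕ} (hn : 1 ≤ n) {g : EuclideanSpace ℝ (Fin n) → ℝ}
    (hW : BernWeak n g) (hg : Continuous g) (hp : ∀ y, 0 < g y)
    (ξ : EuclideanSpace ℝ (Fin n)) (θ : ℝ) :
    ∫ y, g y * Real.cos (⟪ξ, y⟫ + θ) =
      (∫ y, g y) * Real.cos θ * Real.exp (-√2 * ‖ξ‖^2) := by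
  have hI := hW.integrable hn hg hp
  have hi0 : ∀ t : ℝ, Integrable fun y => g y * Real.cos (t * ⟪ξ, y⟫ + θ) := by
    intro t
    refine hI.mono' (Continuous.aestronglyMeasurable (by fun_prop)) (ae_of_all _ fun y => ?_)
    rw [norm_mul, Real.norm_eq_abs, Real.norm_eq_abs, abs_of_pos (hp y)]
    have := Real.abs_cos_le_one (t * ⟪ξ, y⟫ + θ)
    have := hp y
    nlinarith [sq_nonneg ‖y‖, mul_nonneg (sq_nonneg ‖y‖) (hp y).le]
  have hb : ∀ (t : ℝ) y, ‖g y * (-(⟪ξ, y⟫ * Real.sin (t * ⟪ξ, y⟫ + θ)))‖ ≤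
      ‖ξ‖ * ((1 + ‖y‖^2) * g y) := by
    intro t y
    rw [norm_mul, norm_neg, norm_mul, Real.norm_eq_abs, Real.norm_eq_abs, Real.norm_eq_abs,
      abs_of_pos (hp y)]
    have h1 := Real.abs_sin_le_one (t * ⟪ξ, y⟫ + θ)
    have h2 := abs_real_inner_le_norm ξ y
    have h3 : ‖y‖ ≤ 1 + ‖y‖^2 := by nlinarith [sq_nonneg (‖y‖ - 1)]
    have h0 := (hp y).le
    calc g y * (|⟪ξ, y⟫| * |Real.sin (t * ⟪ξ, y⟫ + θ)|) ≤ g y * (‖ξ‖ * (1 + ‖y‖^2) * 1) := by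
          gcongr
          exact h2.trans (by gcongr)
      _ = _ := by ring
  have hd : ∀ t : ℝ, HasDerivAt (fun t : ℝ => ∫ y, g y * Real.cos (t * ⟪ξ, y⟫ + θ))
      (∫ y, g y * (-(⟪ξ, y⟫ * Real.sin (t * ⟪ξ, y⟫ + θ)))) t := by
    intro t
    refine (hasDerivAt_integral_of_dominated_loc_of_deriv_le (s := Set.univ) (μ := volume)
      (F := fun t y => g y * Real.cos (t * ⟪ξ, y⟫ + θ))
      (F' := fun t y => g y * (-(⟪ξ, y⟫ * Real.sin (t * ⟪ξ, y⟫ + θ))))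
      (bound := fun y => ‖ξ‖ * ((1 + ‖y‖^2) * g y)) Filter.univ_mem
      ?_ (hi0 t) ?_ ?_ (hI.const_mul _) ?_).2
    · exact Eventually.of_forall fun t => (hi0 t).1
    · exact Continuous.aestronglyMeasurable (by fun_prop)
    · exact ae_of_all _ fun y t _ => hb t y
    · refine ae_of_all _ fun y t _ => ?_
      refine ((((hasDerivAt_id t).mul_const ⟪ξ, y⟫).add_const θ).cos.const_mul (g y)).congr_deriv ?_
      simp; left; ring
  set F : ℝ → ℝ := fun t => ∫ y, g y * Real.cos (t * ⟪ξ, y⟫ + θ) with hF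
  have hode : ∀ t : ℝ, 0 < t → (∫ y, g y * (-(⟪ξ, y⟫ * Real.sin (t * ⟪ξ, y⟫ + θ)))) =
      -2 * √2 * ‖ξ‖^2 * t * F t := by
    intro t ht
    have h1 := hW.limit hn hg hp (t • ξ) θ
    have hs : Integrable fun y => g y * (-(⟪ξ, y⟫ * Real.sin (t * ⟪ξ, y⟫ + θ))) :=
      (hI.const_mul ‖ξ‖).mono' (Continuous.aestronglyMeasurable (by fun_prop))
        (ae_of_all _ fun y => hb t y)
    have h2 : ∀ y, g y * (-√2 * ‖t • ξ‖^2 * Real.cos (⟪t • ξ, y⟫ + θ)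
        + (1/2) * ⟪t • ξ, y⟫ * Real.sin (⟪t • ξ, y⟫ + θ)) =
        (-√2 * t^2 * ‖ξ‖^2) * (g y * Real.cos (t * ⟪ξ, y⟫ + θ)) +
        (-(1/2) * t) * (g y * (-(⟪ξ, y⟫ * Real.sin (t * ⟪ξ, y⟫ + θ)))) := by
      intro y
      rw [real_inner_smul_left, norm_smul, mul_pow, Real.norm_eq_abs, sq_abs]
      ring
    simp only [h2] at h1
    rw [integral_add ((hi0 t).const_mul _) (hs.const_mul _), integral_const_mul,
      integral_const_mul] at h1
    have h3 : t * ((∫ y, g y * (-(⟪ξ, y⟫ * Real.sin (t * ⟪ξ, y⟫ + θ)))) -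
      (-2 * √2 * ‖ξ‖^2 * t * F t)) = 0 := by
      simp only [hF]; linear_combination -2 * h1
    rcases mul_eq_zero.1 h3 with h | h
    · exact absurd h ht.ne'
    · linarith
  have hH : ∀ t, HasDerivAt (fun t => F t * Real.exp (√2 * ‖ξ‖^2 * t^2))
      ((∫ y, g y * (-(⟪ξ, y⟫ * Real.sin (t * ⟪ξ, y⟫ + θ)))) * Real.exp (√2 * ‖ξ‖^2 * t^2)
        + F t * (Real.exp (√2 * ‖ξ‖^2 * t^2) * (√2 * ‖ξ‖^2 * (2 * t)))) t := by
    intro t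
    refine ((hd t).mul (((hasDerivAt_pow 2 t).const_mul (√2 * ‖ξ‖^2)).exp)).congr_deriv ?_
    simp
  obtain ⟨c, hc, hc2⟩ := exists_hasDerivAt_eq_slope _ _ (zero_lt_one' ℝ)
    (fun t _ => (hH t).continuousAt.continuousWithinAt) (fun t _ => hH t)
  rw [hode c hc.1] at hc2
  have h0 : F 0 = (∫ y, g y) * Real.cos θ := by
    simp only [hF, zero_mul, zero_add]
    rw [integral_mul_const]
  have h1 : F 1 = ∫ y, g y * Real.cos (⟪ξ, y⟫ + θ) := by
    simp only [hF, one_mul]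
  have h2 : F 1 * Real.exp (√2 * ‖ξ‖^2) = F 0 := by
    simp at hc2
    linear_combination -hc2
  rw [← h1, ← h0, ← h2, mul_assoc, ← Real.exp_add]
  simp

open MeasureTheory in
theorem BernWeak.integrable' {n : ℕ} (hn : 1 ≤ n) {g : EuclideanSpace ℝ (Fin n) → ℝ}
    (hW : BernWeak n g) (hg : Continuous g) (hp : ∀ y, 0 < g y) : Integrable g := by
  refine (hW.integrable hn hg hp).mono' hg.aestronglyMeasurable (ae_of_all _ fun y => ?_)
  rw [Real.norm_eq_abs, abs_of_pos (hp y)]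
  nlinarith [mul_nonneg (sq_nonneg ‖y‖) (hp y).le]

open MeasureTheory in
theorem BernWeak.charFun {n : ℕ} (hn : 1 ≤ n) {g : EuclideanSpace ℝ (Fin n) → ℝ}
    (hW : BernWeak n g) (hg : Continuous g) (hp : ∀ y, 0 < g y) (k : ℝ) (hk : 0 ≤ k)
    (ξ : EuclideanSpace ℝ (Fin n)) :
    MeasureTheory.charFun (volume.withDensity fun y => ENNReal.ofReal (k * g y)) ξ =
      ((k * (∫ y, g y) * Real.exp (-√2 * ‖ξ‖^2) : ℝ) : ℂ) := by
  have hi := hW.integrable' hn hg hp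
  rw [charFun_apply, integral_withDensity_eq_integral_toReal_smul (by fun_prop)
    (ae_of_all _ fun y => ENNReal.ofReal_lt_top)]
  have h1 : ∀ y : EuclideanSpace ℝ (Fin n), (ENNReal.ofReal (k * g y)).toReal •
      Complex.exp (⟪y, ξ⟫ * Complex.I) =
      ((k * (g y * Real.cos (⟪ξ, y⟫ + 0)) : ℝ) : ℂ) +
      ((k * (g y * Real.cos (⟪ξ, y⟫ + -(π/2))) : ℝ) : ℂ) * Complex.I := by
    intro y
    rw [ENNReal.toReal_ofReal (mul_nonneg hk (hp y).le), real_inner_comm, add_zero,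
      ← sub_eq_add_neg, Real.cos_sub_pi_div_two, Complex.exp_mul_I, Complex.real_smul]
    push_cast
    ring
  have hic : ∀ θ, Integrable fun y => g y * Real.cos (⟪ξ, y⟫ + θ) := by
    intro θ
    refine hi.mono' (Continuous.aestronglyMeasurable (by fun_prop)) (ae_of_all _ fun y => ?_)
    rw [norm_mul, Real.norm_eq_abs, Real.norm_eq_abs, abs_of_pos (hp y)]
    have := Real.abs_cos_le_one (⟪ξ, y⟫ + θ)
    have := hp y
    nlinarith
  simp only [h1]
  rw [integral_add ((hic 0).const_mul k).ofReal (((hic _).const_mul k).ofReal.mul_const _),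
    integral_mul_const, integral_complex_ofReal, integral_complex_ofReal, integral_const_mul, integral_const_mul,
    hW.fourier hn hg hp, hW.fourier hn hg hp]
  simp
  ring

open MeasureTheory in
theorem bern_unique {n : ℕ} (hn : 1 ≤ n) {g h : EuclideanSpace ℝ (Fin n) → ℝ}
    (hW : BernWeak n g) (hg : Continuous g) (hp : ∀ y, 0 < g y)
    (hW' : BernWeak n h) (hh : Continuous h) (hp' : ∀ y, 0 < h y) :
    ∃ k : ℝ, ∀ y, g y = k * h y := by
  have hi := hW.integrable' hn hg hp
  have hi' := hW'.integrable' hn hh hp'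
  have hpos : ∀ f : EuclideanSpace ℝ (Fin n) → ℝ, Integrable f → (∀ y, 0 < f y) → 0 < ∫ y, f y := by
    intro f hf hfp
    rw [integral_pos_iff_support_of_nonneg (fun y => (hfp y).le) hf]
    have : Function.support f = Set.univ := by
      ext y; simp [(hfp y).ne']
    rw [this]
    exact isOpen_univ.measure_pos _ ⟨0, trivial⟩
  have hc := hpos g hi hp
  have hc' := hpos h hi' hp'
  set c := ∫ y, g y with hcd
  set c' := ∫ y, h y with hcd'
  have hf1 : IsFiniteMeasure (volume.withDensity fun y => ENNReal.ofReal (c' * g y)) :=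
    isFiniteMeasure_withDensity_ofReal (hi.const_mul c').2
  have hf2 : IsFiniteMeasure (volume.withDensity fun y => ENNReal.ofReal (c * h y)) :=
    isFiniteMeasure_withDensity_ofReal (hi'.const_mul c).2
  have hm := Measure.ext_of_charFun (μ := volume.withDensity fun y => ENNReal.ofReal (c' * g y))
    (ν := volume.withDensity fun y => ENNReal.ofReal (c * h y)) (by
      funext ξ
      rw [hW.charFun hn hg hp c' hc'.le, hW'.charFun hn hh hp' c hc.le, ← hcd, ← hcd', mul_comm c c'])
  rw [withDensity_eq_iff_of_sigmaFinite (by fun_prop) (by fun_prop)] at hm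
  have hm2 : (fun y => c' * g y) =ᵐ[volume] fun y => c * h y := by
    filter_upwards [hm] with y hy
    rwa [ENNReal.ofReal_eq_ofReal_iff (mul_nonneg hc'.le (hp y).le)
      (mul_nonneg hc.le (hp' y).le)] at hy
  rw [Continuous.ae_eq_iff_eq volume (by fun_prop) (by fun_prop)] at hm2
  refine ⟨c / c', fun y => ?_⟩
  have := congrFun hm2 y
  field_simp
  linarith

/-- Liouville: the dual of a shrinker has constant phase. -/
theorem bern_liouville {n : ℕ} (hn : 1 ≤ n) (v : EuclideanSpace ℝ (Fin n) → ℝ)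
    (X : EuclideanSpace ℝ (Fin n) → EuclideanSpace ℝ (Fin n))
    (hv : ∀ y, HasGradientAt v (X y) y) (hX : ContDiff ℝ 1 X)
    (heq : ∀ y, √2 * (∑ j, fderiv ℝ X y (EuclideanSpace.single j 1) j) = (1/2) * ⟪y, X y⟫ - v y)
    (hpos : ∀ y, 0 < (1/2) * ⟪y, X y⟫ - v y) :
    ∃ k : ℝ, ∀ y, (1/2) * ⟪y, X y⟫ - v y = k := by
  have hvc : Continuous v := continuous_iff_continuousAt.2 fun y => (hv y).continuousAt
  have hXc := hX.continuous
  have hW : BernWeak n (fun y => ((1/2) * ⟪y, X y⟫ - v y) * Real.exp (-(√2 / 8) * ‖y‖^2)) :=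
    fun ξ A A' A'' K K' K'' hA hA' hA'' hK hK' hK'' a ha =>
      bern_weak v X hv hX heq ξ A A' A'' K K' K'' hA hA' hA'' hK hK' hK'' a ha
  have hn0 : (0:ℝ) < n := by exact_mod_cast hn
  have hq : (0:ℝ) < √2 := by positivity
  have hid : ∀ y : EuclideanSpace ℝ (Fin n), (1/2) * ⟪y, y⟫ - ((1/2) * ‖y‖^2 - √2 * n) = √2 * n := by
    intro y; rw [real_inner_self_eq_norm_sq]; ring
  have hW0 : BernWeak n (fun y => ((1/2) * ⟪y, id y⟫ - ((1/2) * ‖y‖^2 - √2 * n))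
      * Real.exp (-(√2 / 8) * ‖y‖^2)) := by
    intro ξ A A' A'' K K' K'' hA hA' hA'' hK hK' hK'' a ha
    refine bern_weak (fun y => (1/2) * ‖y‖^2 - √2 * n) id ?_ contDiff_id ?_
      ξ A A' A'' K K' K'' hA hA' hA'' hK hK' hK'' a ha
    · intro y
      rw [hasGradientAt_iff_hasFDerivAt]
      refine (((hasStrictFDerivAt_norm_sq y).hasFDerivAt.const_mul (1/2 : ℝ)).sub_const _).congr_fderiv ?_
      ext z
      simp
    · intro y
      simp only [id]
      rw [hid]
      simp
  obtain ⟨k, hk⟩ := bern_unique hn hW (by fun_prop) (fun y => mul_pos (hpos y) (Real.exp_pos _))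
    hW0 (by fun_prop) (fun y => by
      simp only [id]
      rw [hid]; positivity)
  refine ⟨k * (√2 * n), fun y => ?_⟩
  have := hk y
  simp only [id] at this
  rw [hid, ← mul_assoc] at this
  exact mul_right_cancel₀ (Real.exp_pos _).ne' this

theorem bern_diag {n : ℕ} (T : EuclideanSpace ℝ (Fin n) →L[ℝ] EuclideanSpace ℝ (Fin n))
    (b : OrthonormalBasis (Fin n) ℝ (EuclideanSpace ℝ (Fin n))) (μ : Fin n → ℝ)
    (hT : ∀ i, T (b i) = μ i • b i) (i : Fin n) (z : EuclideanSpace ℝ (Fin n)) :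
    ⟪b i, T z⟫ = μ i * ⟪b i, z⟫ := by
  classical
  conv_lhs => rw [← b.sum_repr' z]
  simp only [map_sum, map_smul, hT, inner_sum, inner_smul_right, b.inner_eq_ite]
  simp
  ring

theorem bern_inv {n : ℕ} (T : EuclideanSpace ℝ (Fin n) →L[ℝ] EuclideanSpace ℝ (Fin n))
    (b : OrthonormalBasis (Fin n) ℝ (EuclideanSpace ℝ (Fin n))) (μ : Fin n → ℝ)
    (hμ : ∀ i, 0 < μ i) (hT : ∀ i, T (b i) = μ i • b i) :
    (∀ z, z ≠ 0 → 0 < ⟪z, T z⟫) ∧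
    ∃ S : EuclideanSpace ℝ (Fin n) ≃L[ℝ] EuclideanSpace ℝ (Fin n),
      (S : EuclideanSpace ℝ (Fin n) →L[ℝ] EuclideanSpace ℝ (Fin n)) = T ∧
      (∀ z, ‖S.symm z‖ ≤ (∑ i, 1 / μ i) * ‖z‖) ∧
      ∑ j, (S.symm (EuclideanSpace.single j 1)) j = ∑ i, 1 / μ i := by
  have hpos : ∀ z, z ≠ 0 → 0 < ⟪z, T z⟫ := by
    intro z hz
    have h1 : ⟪z, T z⟫ = ∑ i, μ i * ⟪b i, z⟫ ^ 2 := by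
      rw [← b.sum_inner_mul_inner]
      refine Finset.sum_congr rfl fun i _ => ?_
      rw [bern_diag T b μ hT, real_inner_comm]; ring
    rw [h1]
    have h0 : ∀ i ∈ Finset.univ, 0 ≤ μ i * ⟪b i, z⟫ ^ 2 :=
      fun i _ => mul_nonneg (hμ i).le (sq_nonneg _)
    refine lt_of_le_of_ne (Finset.sum_nonneg h0) fun h => hz ?_
    have h2 := (Finset.sum_eq_zero_iff_of_nonneg h0).1 h.symm
    rw [← b.sum_repr' z]
    refine Finset.sum_eq_zero fun i _ => ?_
    have := h2 i (Finset.mem_univ _)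
    simp only [mul_eq_zero, (hμ i).ne', false_or] at this
    have h5 : ⟪b i, z⟫ = 0 := by simpa using this
    rw [h5, zero_smul]
  refine ⟨hpos, ?_⟩
  have hinj : Function.Injective T.toLinearMap := by
    rw [← LinearMap.ker_eq_bot, LinearMap.ker_eq_bot']
    intro z hz
    by_contra h
    have := hpos z h
    have hz' : T z = 0 := hz
    rw [hz', inner_zero_right] at this
    exact lt_irrefl _ this
  set S := (LinearEquiv.ofInjectiveEndo T.toLinearMap hinj).toContinuousLinearEquiv with hS
  have hST : (S : EuclideanSpace ℝ (Fin n) →L[ℝ] EuclideanSpace ℝ (Fin n)) = T := by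
    ext z; rfl
  have hST' : ∀ z, T (S.symm z) = z := by
    intro z
    rw [← hST]; exact S.apply_symm_apply z
  have hSi : ∀ i z, ⟪b i, S.symm z⟫ = 1 / μ i * ⟪b i, z⟫ := by
    intro i z
    have := bern_diag T b μ hT i (S.symm z)
    rw [hST'] at this
    rw [this]
    have := (hμ i).ne'
    field_simp
  refine ⟨S, hST, ?_, ?_⟩
  · intro z
    have hs0 : 0 ≤ ∑ i, 1 / μ i := Finset.sum_nonneg fun i _ => (one_div_pos.2 (hμ i)).le
    apply le_of_sq_le_sq _ (by positivity)
    rw [mul_pow, ← b.sum_sq_inner_right, ← b.sum_sq_inner_right z, Finset.mul_sum]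
    refine Finset.sum_le_sum fun i _ => ?_
    rw [hSi, mul_pow]
    have h1 : 1 / μ i ≤ ∑ i, 1 / μ i :=
      Finset.single_le_sum (f := fun i => 1 / μ i) (fun i _ => (one_div_pos.2 (hμ i)).le)
        (Finset.mem_univ i)
    have h2 := (one_div_pos.2 (hμ i)).le
    gcongr
  · have h1 := LinearMap.trace_eq_sum_inner (S.symm.toLinearEquiv.toLinearMap)
      (EuclideanSpace.basisFun (Fin n) ℝ)
    have h2 := LinearMap.trace_eq_sum_inner (S.symm.toLinearEquiv.toLinearMap) b
    rw [h1] at h2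
    have h3 : ∀ i, ⟪b i, S.symm (b i)⟫ = 1 / μ i := by
      intro i
      rw [hSi]; simp
    rw [← Finset.sum_congr rfl (fun i _ => h3 i)]
    refine Eq.trans ?_ h2
    refine Finset.sum_congr rfl fun j _ => ?_
    simp
    rw [EuclideanSpace.inner_single_left]
    simp

/-- Local Legendre data. -/
theorem bern_local {n : ℕ} (G : EuclideanSpace ℝ (Fin n) → EuclideanSpace ℝ (Fin n))
    (hG : ContDiff ℝ 1 G)
    (hpos : ∀ x z, z ≠ 0 → 0 < ⟪z, fderiv ℝ G x z⟫)
    (hS : ∀ x, ∃ S : EuclideanSpace ℝ (Fin n) ≃L[ℝ] EuclideanSpace ℝ (Fin n),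
      (S : EuclideanSpace ℝ (Fin n) →L[ℝ] EuclideanSpace ℝ (Fin n)) = fderiv ℝ G x) :
    IsOpen (Set.range G) ∧ ∃ X : EuclideanSpace ℝ (Fin n) → EuclideanSpace ℝ (Fin n),
      ∀ x, X (G x) = x ∧ ContDiffAt ℝ 1 X (G x) ∧
        ∀ S : EuclideanSpace ℝ (Fin n) ≃L[ℝ] EuclideanSpace ℝ (Fin n),
        (S : EuclideanSpace ℝ (Fin n) →L[ℝ] EuclideanSpace ℝ (Fin n)) = fderiv ℝ G x →
        HasFDerivAt X (S.symm : EuclideanSpace ℝ (Fin n) →L[ℝ] EuclideanSpace ℝ (Fin n)) (G x) := by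
  have hd : ∀ x, HasFDerivAt G (fderiv ℝ G x) x :=
    fun x => (hG.differentiable one_ne_zero x).hasFDerivAt
  have hinj : Function.Injective G := by
    intro x y hxy
    by_contra hne
    have hz : y - x ≠ 0 := sub_ne_zero.2 (Ne.symm hne)
    have hder : ∀ t : ℝ, HasDerivAt (fun t : ℝ => ⟪y - x, G (x + t • (y - x))⟫)
        (⟪y - x, fderiv ℝ G (x + t • (y - x)) (y - x)⟫) t := by
      intro t
      have h1 : HasDerivAt (fun t : ℝ => x + t • (y - x)) (y - x) t := by
        simpa using ((hasDerivAt_id t).smul_const (y - x)).const_add x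
      have h2 := (hd (x + t • (y - x))).comp_hasDerivAt t h1
      have h3 := (innerSL ℝ (y - x)).hasFDerivAt.comp_hasDerivAt t h2
      exact h3
    have hm := strictMono_of_hasDerivAt_pos hder (fun t => hpos _ _ hz)
    have := hm (zero_lt_one' ℝ)
    simp [hxy] at this
  have hopen : IsOpenMap G := by
    rw [isOpenMap_iff_nhds_le]
    intro x
    obtain ⟨S, hS⟩ := hS x
    have h1 : HasStrictFDerivAt G (S : EuclideanSpace ℝ (Fin n) →L[ℝ] EuclideanSpace ℝ (Fin n)) x := by
      rw [hS]
      exact hG.contDiffAt.hasStrictFDerivAt one_ne_zero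
    exact h1.map_nhds_eq_of_equiv.ge
  have hemb := Topology.IsOpenEmbedding.of_continuous_injective_isOpenMap hG.continuous hinj hopen
  refine ⟨hemb.isOpen_range, (hemb.toOpenPartialHomeomorph G).symm, fun x => ?_⟩
  have hx : (hemb.toOpenPartialHomeomorph G).symm (G x) = x :=
    (hemb.toOpenPartialHomeomorph G).left_inv (Set.mem_univ x)
  have hm : G x ∈ (hemb.toOpenPartialHomeomorph G).target :=
    (hemb.toOpenPartialHomeomorph G).map_source (Set.mem_univ x)
  have hf : ∀ S : EuclideanSpace ℝ (Fin n) ≃L[ℝ] EuclideanSpace ℝ (Fin n),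
        (S : EuclideanSpace ℝ (Fin n) →L[ℝ] EuclideanSpace ℝ (Fin n)) = fderiv ℝ G x →
        HasFDerivAt (hemb.toOpenPartialHomeomorph G)
          (S : EuclideanSpace ℝ (Fin n) →L[ℝ] EuclideanSpace ℝ (Fin n))
          ((hemb.toOpenPartialHomeomorph G).symm (G x)) := by
    intro S hS
    rw [hx, hS]; exact hd x
  refine ⟨hx, ?_, fun S hS => ?_⟩
  · obtain ⟨S, hS⟩ := hS x
    refine (hemb.toOpenPartialHomeomorph G).contDiffAt_symm hm (hf S hS) ?_
    exact hG.contDiffAt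
  · exact (hemb.toOpenPartialHomeomorph G).hasFDerivAt_symm hm (hf S hS)

theorem bern_core {n : ℕ} (hn : 1 ≤ n) (w : EuclideanSpace ℝ (Fin n) → ℝ)
    (G : EuclideanSpace ℝ (Fin n) → EuclideanSpace ℝ (Fin n))
    (hw : ∀ x, HasGradientAt w (G x) x) (hG : ContDiff ℝ 1 G)
    (hE : ∀ x, ∃ (b : OrthonormalBasis (Fin n) ℝ (EuclideanSpace ℝ (Fin n))) (μ : Fin n → ℝ),
      (∀ i, 0 < μ i) ∧ (∀ i, fderiv ℝ G x (b i) = μ i • b i) ∧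
      √2 * ∑ i, 1 / μ i = w x - (1/2) * ⟪x, G x⟫) :
    ∃ k : ℝ, ∀ x, w x - (1/2) * ⟪x, G x⟫ = k := by
  have hD : ∀ x, (∀ z, z ≠ 0 → 0 < ⟪z, fderiv ℝ G x z⟫) ∧
      ∃ S : EuclideanSpace ℝ (Fin n) ≃L[ℝ] EuclideanSpace ℝ (Fin n),
      (S : EuclideanSpace ℝ (Fin n) →L[ℝ] EuclideanSpace ℝ (Fin n)) = fderiv ℝ G x ∧
      0 < w x - (1/2) * ⟪x, G x⟫ ∧
      (∀ z, ‖S.symm z‖ ≤ (w x - (1/2) * ⟪x, G x⟫) * ‖z‖) ∧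
      √2 * ∑ j, (S.symm (EuclideanSpace.single j 1)) j = w x - (1/2) * ⟪x, G x⟫ := by
    intro x
    obtain ⟨b, μ, hμ, hb, he⟩ := hE x
    obtain ⟨h1, S, h2, h3, h4⟩ := bern_inv (fderiv ℝ G x) b μ hμ hb
    have : Nonempty (Fin n) := ⟨⟨0, hn⟩⟩
    have hs : 0 < ∑ i, 1 / μ i :=
      Finset.sum_pos (fun i _ => one_div_pos.2 (hμ i)) Finset.univ_nonempty
    have hq1 : (1:ℝ) ≤ √2 := by rw [Real.one_le_sqrt]; norm_num
    refine ⟨h1, S, h2, ?_, fun z => (h3 z).trans ?_, ?_⟩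
    · rw [← he]; positivity
    · rw [← he]
      gcongr
      nlinarith
    · rw [h4, he]
  choose hD1 S hS hφ hSn hSt using hD
  obtain ⟨hopen, X, hX⟩ := bern_local G hG hD1 (fun x => ⟨S x, hS x⟩)
  set v : EuclideanSpace ℝ (Fin n) → ℝ := fun y => ⟪X y, y⟫ - w (X y) with hv
  have hXd : ∀ x, HasFDerivAt X ((S x).symm : EuclideanSpace ℝ (Fin n) →L[ℝ] EuclideanSpace ℝ (Fin n))
      (G x) := fun x => (hX x).2.2 (S x) (hS x)
  have hvd : ∀ x, HasFDerivAt v (innerSL ℝ x) (G x) := by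
    intro x
    have h1 := (hXd x).inner ℝ (hasFDerivAt_id (𝕜 := ℝ) (G x))
    have hw' := (hw x).hasFDerivAt
    have h2 : HasFDerivAt w (innerSL ℝ (G x)) (X (G x)) := by
      rw [(hX x).1]
      exact hw'
    have h3 := h1.sub (h2.comp (G x) (hXd x))
    refine h3.congr_fderiv ?_
    ext z
    simp [(hX x).1]
    rw [real_inner_comm (G x)]; ring
  have hφv : ∀ x, w x - (1/2) * ⟪x, G x⟫ = (1/2) * ⟪G x, X (G x)⟫ - v (G x) := by
    intro x
    simp only [hv, (hX x).1]
    rw [real_inner_comm x (G x)]; ring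
  have hsurj : Function.Surjective G := by
    by_contra hns
    have hns2 : ∃ y1, y1 ∉ Set.range G := by
      simp only [Function.Surjective, not_forall] at hns
      exact hns
    obtain ⟨y1, hy1⟩ := hns2
    set y0 := G 0 with hy0
    set d := y1 - y0 with hd
    set γ : ℝ → EuclideanSpace ℝ (Fin n) := fun t => y0 + t • d with hγ
    have hγc : Continuous γ := by fun_prop
    have hγd : ∀ t, HasDerivAt γ d t := by
      intro t
      exact (((hasDerivAt_id t).smul_const d).const_add y0).congr_deriv (by simp)
    have hcpt : IsCompact (Set.Icc (0:ℝ) 1 ∩ γ ⁻¹' (Set.range G)ᶜ) :=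
      isCompact_Icc.inter_right (hopen.isClosed_compl.preimage hγc)
    obtain ⟨T, hT, hTl⟩ := hcpt.exists_isLeast ⟨1, by simp, by
      simp only [Set.mem_preimage, hγ, hd]
      simpa using hy1⟩
    have hT0 : 0 < T := by
      refine lt_of_le_of_ne hT.1.1 fun h => hT.2 ?_
      rw [← h]
      exact ⟨0, by simp [hγ, hy0]⟩
    have hin : ∀ t, 0 ≤ t → t < T → ∃ x, G x = γ t := by
      intro t ht htT
      by_contra h
      have h2 := hTl (a := t) ⟨⟨ht, htT.le.trans hT.1.2⟩, h⟩
      linarith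
    set f : ℝ → EuclideanSpace ℝ (Fin n) × ℝ := fun t => (X (γ t), v (γ t)) with hf
    set K := ((1/2) * (‖y0‖ + ‖d‖) + 1) * ‖d‖ with hK
    have hK0 : 0 ≤ K := by positivity
    have hfd : ∀ t, 0 ≤ t → t < T → ∃ f', HasDerivAt f f' t ∧ ‖f'‖ ≤ K * ‖f t‖ := by
      intro t ht htT
      obtain ⟨x, hx⟩ := hin t ht htT
      have h1 : HasDerivAt (fun t => X (γ t)) ((S x).symm d) t := by
        have := hXd x
        rw [hx] at this
        exact this.comp_hasDerivAt t (hγd t)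
      have h2 : HasDerivAt (fun t => v (γ t)) (⟪x, d⟫) t := by
        have := hvd x
        rw [hx] at this
        exact this.comp_hasDerivAt t (hγd t)
      refine ⟨_, h1.prodMk h2, ?_⟩
      have hXx : X (γ t) = x := by rw [← hx]; exact (hX x).1
      have e1 : ‖x‖ ≤ ‖f t‖ := by
        simp [hf, hXx]
      have e2 : |v (γ t)| ≤ ‖f t‖ := by
        simp [hf]
      have e3 : ‖γ t‖ ≤ ‖y0‖ + ‖d‖ := by
        refine (norm_add_le _ _).trans ?_
        rw [norm_smul, Real.norm_eq_abs, abs_of_nonneg ht]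
        have : t ≤ 1 := htT.le.trans hT.1.2
        have := norm_nonneg d
        nlinarith
      have e4 : w x - (1/2) * ⟪x, G x⟫ ≤ ((1/2) * (‖y0‖ + ‖d‖) + 1) * ‖f t‖ := by
        rw [hφv, hx, hXx]
        have a1 := real_inner_le_norm (γ t) x
        have a2 : ‖γ t‖ * ‖x‖ ≤ (‖y0‖ + ‖d‖) * ‖f t‖ := by gcongr
        have a3 := neg_abs_le (v (γ t))
        nlinarith
      rw [Prod.norm_mk]
      refine max_le ?_ ?_
      · calc _ ≤ _ := hSn x d
          _ ≤ ((1/2) * (‖y0‖ + ‖d‖) + 1) * ‖f t‖ * ‖d‖ := by gcongr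
          _ = _ := by rw [hK]; ring
      · rw [Real.norm_eq_abs]
        refine (abs_real_inner_le_norm x d).trans ?_
        rw [hK]
        have a0 : 0 ≤ (1/2) * (‖y0‖ + ‖d‖) := by positivity
        have a1 : ‖x‖ * ‖d‖ ≤ ‖f t‖ * ‖d‖ := by gcongr
        have a2 : 0 ≤ (1/2) * (‖y0‖ + ‖d‖) * (‖f t‖ * ‖d‖) := by positivity
        nlinarith
    have hbd : ∀ t, 0 ≤ t → t < T → ‖f t‖ ≤ ‖f 0‖ * Real.exp K := by
      intro t ht htT
      have h1 := norm_le_gronwallBound_of_norm_deriv_right_le (f := f) (f' := fun s => deriv f s)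
        (δ := ‖f 0‖) (K := K) (ε := 0) (a := 0) (b := t)
        (fun s hs => by
          obtain ⟨f', h, _⟩ := hfd s hs.1 (hs.2.trans_lt htT)
          exact h.continuousAt.continuousWithinAt)
        (fun s hs => by
          obtain ⟨f', h, _⟩ := hfd s hs.1 (hs.2.trans htT)
          rw [h.deriv]
          exact h.hasDerivWithinAt)
        le_rfl
        (fun s hs => by
          obtain ⟨f', h, h'⟩ := hfd s hs.1 (hs.2.trans htT)
          rw [h.deriv, add_zero]
          exact h') t ⟨ht, le_rfl⟩
      rw [gronwallBound_ε0, sub_zero] at h1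
      refine h1.trans ?_
      have : t ≤ 1 := htT.le.trans hT.1.2
      gcongr
      nlinarith
    set B := ‖f 0‖ * Real.exp K with hB
    have hcl : IsClosed (γ ⁻¹' (G '' Metric.closedBall 0 B)) :=
      (((isCompact_closedBall _ _).image hG.continuous).isClosed).preimage hγc
    have hsub : Set.Ico 0 T ⊆ γ ⁻¹' (G '' Metric.closedBall 0 B) := by
      intro t ht
      obtain ⟨x, hx⟩ := hin t ht.1 ht.2
      refine ⟨x, ?_, hx⟩
      rw [mem_closedBall_zero_iff]
      refine le_trans ?_ (hbd t ht.1 ht.2)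
      have hXx : X (γ t) = x := by rw [← hx]; exact (hX x).1
      simp [hf, hXx]
    have hTm : T ∈ γ ⁻¹' (G '' Metric.closedBall 0 B) := by
      apply closure_minimal hsub hcl
      rw [closure_Ico hT0.ne]
      exact ⟨hT0.le, le_rfl⟩
    obtain ⟨x, _, hx⟩ := hTm
    exact hT.2 ⟨x, hx⟩
  obtain ⟨k, hk⟩ := bern_liouville hn v X
    (fun y => by
      obtain ⟨x, rfl⟩ := hsurj y
      rw [hasGradientAt_iff_hasFDerivAt, (hX x).1]
      exact hvd x)
    (contDiff_iff_contDiffAt.2 fun y => by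
      obtain ⟨x, rfl⟩ := hsurj y
      exact (hX x).2.1)
    (fun y => by
      obtain ⟨x, rfl⟩ := hsurj y
      rw [(hXd x).fderiv, ← hφv]
      exact hSt x)
    (fun y => by
      obtain ⟨x, rfl⟩ := hsurj y
      rw [← hφv]
      exact hφ x)
  exact ⟨k, fun x => by rw [hφv, hk]⟩

theorem bern_grad_contDiff {n : ℕ} (u : EuclideanSpace ℝ (Fin n) → ℝ) (hu : ContDiff ℝ 2 u) :
    ContDiff ℝ 1 (gradient u) := by
  have h1 : ContDiff ℝ 1 (fderiv ℝ u) := hu.fderiv_right (by norm_num)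
  exact (InnerProductSpace.toDual ℝ (EuclideanSpace ℝ (Fin n))).symm.contDiff.comp h1

theorem bern_grad_fderiv {n : ℕ} (u : EuclideanSpace ℝ (Fin n) → ℝ) (hu : ContDiff ℝ 2 u)
    (x z y : EuclideanSpace ℝ (Fin n)) :
    ⟪fderiv ℝ (gradient u) x z, y⟫ = fderiv ℝ (fderiv ℝ u) x z y := by
  have h1 : ContDiff ℝ 1 (fderiv ℝ u) := hu.fderiv_right (by norm_num)
  have h2 := (h1.differentiable one_ne_zero x).hasFDerivAt
  have h3 : HasFDerivAt (gradient u) _ x :=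
    (InnerProductSpace.toDual ℝ (EuclideanSpace ℝ (Fin n))).symm.toContinuousLinearEquiv.hasFDerivAt.comp x h2
  rw [h3.fderiv]
  exact InnerProductSpace.toDual_symm_apply

theorem bern_hess_symm {n : ℕ} (u : EuclideanSpace ℝ (Fin n) → ℝ) (hu : ContDiff ℝ 2 u)
    (x : EuclideanSpace ℝ (Fin n)) (i j : Fin n) : Hess n u x i j = Hess n u x j i := by
  have h := (hu.contDiffAt (x := x)).isSymmSndFDerivAt (by simp)
  simp only [Hess, Matrix.of_apply, iteratedFDeriv_two_apply]
  exact h _ _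

theorem bern_hess_herm {n : ℕ} (u : EuclideanSpace ℝ (Fin n) → ℝ) (hu : ContDiff ℝ 2 u)
    (x : EuclideanSpace ℝ (Fin n)) : (Hess n u x).IsHermitian := by
  ext i j
  simpa using bern_hess_symm u hu x j i

theorem bern_hess {n : ℕ} (u : EuclideanSpace ℝ (Fin n) → ℝ) (hu : ContDiff ℝ 2 u)
    (x z : EuclideanSpace ℝ (Fin n)) (k : Fin n) :
    (fderiv ℝ (gradient u) x z) k = ∑ j, Hess n u x k j * z j := by
  have h1 : (fderiv ℝ (gradient u) x z) k =
      ⟪fderiv ℝ (gradient u) x z, EuclideanSpace.single k 1⟫ := by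
    rw [EuclideanSpace.inner_single_right]; simp
  rw [h1, bern_grad_fderiv u hu]
  have h2 : z = ∑ j, z j • EuclideanSpace.single j (1:ℝ) := by
    have := (EuclideanSpace.basisFun (Fin n) ℝ).sum_repr z
    simpa using this.symm
  conv_lhs => rw [h2]
  rw [map_sum, _root_.sum_apply]
  refine Finset.sum_congr rfl fun j _ => ?_
  rw [bern_hess_symm u hu]
  simp only [Hess, Matrix.of_apply, iteratedFDeriv_two_apply, map_smul]
  simp
  ring

theorem bern_eigvec {n : ℕ} (u : EuclideanSpace ℝ (Fin n) → ℝ) (hu : ContDiff ℝ 2 u)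
    (x : EuclideanSpace ℝ (Fin n)) (i : Fin n) :
    fderiv ℝ (gradient u) x ((bern_hess_herm u hu x).eigenvectorBasis i) =
      eigs (Hess n u x) i • (bern_hess_herm u hu x).eigenvectorBasis i := by
  have h := (bern_hess_herm u hu x).mulVec_eigenvectorBasis i
  have he : eigs (Hess n u x) = (bern_hess_herm u hu x).eigenvalues := by
    unfold eigs; rw [dif_pos (bern_hess_herm u hu x)]
  rw [he]
  ext k
  rw [bern_hess u hu]
  have := congrFun h k
  simpa [Matrix.mulVec, dotProduct] using this

/-- The sign of the shifted eigenvalues. -/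
theorem bern_eig_pos {n : ℕ} (A : Matrix (Fin n) (Fin n) ℝ) (hA : A.IsHermitian)
    (h : (A + 1).PosDef) (i : Fin n) : 0 < 1 + hA.eigenvalues i := by
  have hne : (hA.eigenvectorBasis i).ofLp ≠ 0 := by
    intro h0
    apply hA.eigenvectorBasis.orthonormal.ne_zero i
    ext k
    exact congrFun h0 k
  have h1 := h.dotProduct_mulVec_pos hne
  rw [Matrix.add_mulVec, Matrix.one_mulVec, hA.mulVec_eigenvectorBasis, star_trivial,
    dotProduct_add, dotProduct_smul, smul_eq_mul] at h1
  have h2 : 0 ≤ (hA.eigenvectorBasis i).ofLp ⬝ᵥ (hA.eigenvectorBasis i).ofLp :=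
    Finset.sum_nonneg fun j _ => mul_self_nonneg _
  by_contra h3
  push Not at h3
  nlinarith

theorem bern_eig_neg {n : ℕ} (A : Matrix (Fin n) (Fin n) ℝ) (hA : A.IsHermitian)
    (h : (-(1 : Matrix (Fin n) (Fin n) ℝ) - A).PosDef) (i : Fin n) :
    0 < -(1 + hA.eigenvalues i) := by
  have hne : (hA.eigenvectorBasis i).ofLp ≠ 0 := by
    intro h0
    apply hA.eigenvectorBasis.orthonormal.ne_zero i
    ext k
    exact congrFun h0 k
  have h1 := h.dotProduct_mulVec_pos hne
  rw [Matrix.sub_mulVec, Matrix.neg_mulVec, Matrix.one_mulVec, hA.mulVec_eigenvectorBasis,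
    star_trivial, dotProduct_sub, dotProduct_smul, dotProduct_neg, smul_eq_mul] at h1
  have h2 : 0 ≤ (hA.eigenvectorBasis i).ofLp ⬝ᵥ (hA.eigenvectorBasis i).ofLp :=
    Finset.sum_nonneg fun j _ => mul_self_nonneg _
  by_contra h3
  push Not at h3
  nlinarith

/-- Constancy of the phase. -/
theorem bern_const (n : ℕ) (hn : 1 ≤ n)
    (u : EuclideanSpace ℝ (Fin n) → ℝ)
    (hu : ContDiff ℝ 2 u)
    (heq : ∀ x, -Real.sqrt 2 * ∑ i, 1 / (1 + eigs (Hess n u x) i)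
      = -u x + (1/2) * ⟪x, gradient u x⟫)
    (hadm : (∀ x, (Hess n u x + 1).PosDef) ∨
      (∀ x, (-(1 : Matrix (Fin n) (Fin n) ℝ) - Hess n u x).PosDef)) :
    ∃ k : ℝ, ∀ x, u x - (1/2) * ⟪x, gradient u x⟫ = k := by
  have hug : ∀ x, HasGradientAt u (gradient u x) x :=
    fun x => (hu.differentiable two_ne_zero x).hasGradientAt
  have hgc := bern_grad_contDiff u hu
  have hgd : ∀ x, HasFDerivAt (gradient u) (fderiv ℝ (gradient u) x) x :=
    fun x => (hgc.differentiable one_ne_zero x).hasFDerivAt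
  have he : ∀ x, eigs (Hess n u x) = (bern_hess_herm u hu x).eigenvalues := by
    intro x
    unfold eigs; rw [dif_pos (bern_hess_herm u hu x)]
  have hwg : ∀ x, HasFDerivAt (fun x => u x + (1/2) * ‖x‖^2) (innerSL ℝ (gradient u x + x)) x := by
    intro x
    refine ((hug x).hasFDerivAt.add
      ((hasStrictFDerivAt_norm_sq x).hasFDerivAt.const_mul (1/2 : ℝ))).congr_fderiv ?_
    ext z
    simp
  have hGd : ∀ x, HasFDerivAt (fun x => gradient u x + x)
      (fderiv ℝ (gradient u) x + ContinuousLinearMap.id ℝ _) x :=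
    fun x => (hgd x).add (hasFDerivAt_id x)
  rcases hadm with hadm | hadm
  · obtain ⟨k, hk⟩ := bern_core hn (fun x => u x + (1/2) * ‖x‖^2) (fun x => gradient u x + x)
      (fun x => by
        rw [hasGradientAt_iff_hasFDerivAt]
        exact hwg x)
      (hgc.add contDiff_id)
      (fun x => by
        refine ⟨(bern_hess_herm u hu x).eigenvectorBasis, fun i => 1 + eigs (Hess n u x) i, ?_, ?_, ?_⟩
        · intro i
          rw [he]
          exact bern_eig_pos _ _ (hadm x) i
        · intro i
          rw [(hGd x).fderiv]
          simp only [_root_.add_apply, bern_eigvec u hu, ContinuousLinearMap.id_apply]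
          rw [add_smul, one_smul, add_comm]
        · rw [inner_add_right, real_inner_self_eq_norm_sq]
          linarith [heq x])
    refine ⟨k, fun x => ?_⟩
    have := hk x
    rw [inner_add_right, real_inner_self_eq_norm_sq] at this
    linarith
  · obtain ⟨k, hk⟩ := bern_core hn (fun x => -(u x + (1/2) * ‖x‖^2)) (fun x => -(gradient u x + x))
      (fun x => by
        rw [hasGradientAt_iff_hasFDerivAt]
        refine (hwg x).neg.congr_fderiv ?_
        ext z
        simp)
      (hgc.add contDiff_id).neg
      (fun x => by
        refine ⟨(bern_hess_herm u hu x).eigenvectorBasis, fun i => -(1 + eigs (Hess n u x) i), ?_, ?_, ?_⟩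
        · intro i
          rw [he]
          exact bern_eig_neg _ _ (hadm x) i
        · intro i
          have hneg : HasFDerivAt (fun x => -(gradient u x + x))
            (-(fderiv ℝ (gradient u) x + ContinuousLinearMap.id ℝ _)) x := (hGd x).neg
          rw [hneg.fderiv]
          simp only [_root_.neg_apply, _root_.add_apply, bern_eigvec u hu,
            ContinuousLinearMap.id_apply]
          rw [neg_smul, add_smul, one_smul, add_comm]
        · rw [inner_neg_right, inner_add_right, real_inner_self_eq_norm_sq]
          have h1 : ∑ i, 1 / -(1 + eigs (Hess n u x) i) = - ∑ i, 1 / (1 + eigs (Hess n u x) i) := by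
            rw [← Finset.sum_neg_distrib]
            refine Finset.sum_congr rfl fun i _ => ?_
            rw [one_div, one_div, inv_neg]
          rw [h1]
          linarith [heq x])
    refine ⟨-k, fun x => ?_⟩
    have := hk x
    rw [inner_neg_right, inner_add_right, real_inner_self_eq_norm_sq] at this
    linarith

/-- A `C²` solution of the Euler relation is quadratic. -/
theorem bern_quad {n : ℕ} (u : EuclideanSpace ℝ (Fin n) → ℝ) (hu : ContDiff ℝ 2 u) (k : ℝ)
    (hk : ∀ x, u x - (1/2) * ⟪x, gradient u x⟫ = k) (x : EuclideanSpace ℝ (Fin n)) :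
    u x = k + (1/2) * (∑ i, ∑ j, Hess n u 0 i j * x i * x j) := by
  have hug : ∀ x, HasGradientAt u (gradient u x) x :=
    fun x => (hu.differentiable two_ne_zero x).hasGradientAt
  have hgc := bern_grad_contDiff u hu
  have hgd : ∀ x, HasFDerivAt (gradient u) (fderiv ℝ (gradient u) x) x :=
    fun x => (hgc.differentiable one_ne_zero x).hasFDerivAt
  have hl : ∀ t : ℝ, HasDerivAt (fun t : ℝ => t • x) x t := by
    intro t
    exact ((hasDerivAt_id t).smul_const x).congr_deriv (by simp)
  have hd : ∀ t : ℝ, HasDerivAt (fun t : ℝ => u (t • x)) ⟪gradient u (t • x), x⟫ t :=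
    fun t => by
      have h := (hug (t • x)).hasFDerivAt
      exact h.comp_hasDerivAt t (hl t)
  have hk' : ∀ t : ℝ, t * ⟪gradient u (t • x), x⟫ = 2 * (u (t • x) - k) := by
    intro t
    have := hk (t • x)
    rw [real_inner_smul_left, real_inner_comm] at this
    linarith
  have hq : ∀ t : ℝ, 0 < t → HasDerivAt (fun t : ℝ => (u (t • x) - k) / t^2) 0 t := by
    intro t ht
    refine (((hd t).sub_const k).div (hasDerivAt_pow 2 t) (by positivity)).congr_deriv ?_
    rw [div_eq_zero_iff]
    left
    have := hk' t
    simp only [Nat.add_one_sub_one, pow_one, Nat.cast_ofNat]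
    linear_combination t * this
  have hconst : ∀ t : ℝ, 0 < t → u (t • x) - k = (u x - k) * t^2 := by
    intro t ht
    have h1 := isOpen_Ioi.is_const_of_deriv_eq_zero (s := Set.Ioi (0:ℝ))
      (f := fun t : ℝ => (u (t • x) - k) / t^2) isPreconnected_Ioi
      (fun s hs => (hq s hs).differentiableAt.differentiableWithinAt)
      (fun s hs => (hq s hs).deriv) (x := t) (y := 1) ht (Set.mem_Ioi.2 one_pos)
    simp only [one_smul, one_pow, div_one] at h1
    rw [← h1]
    field_simp
  have hEq : Set.EqOn (fun t : ℝ => ⟪gradient u (t • x), x⟫) (fun t => 2 * (u x - k) * t)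
      (Set.Ioi 0) := by
    intro t ht
    have ht' : (0:ℝ) < t := ht
    have h1 := hk' t
    rw [hconst t ht'] at h1
    apply mul_left_cancel₀ ht'.ne'
    simp only
    rw [h1]; ring
  have hgcc := hgc.continuous
  have hEq2 := hEq.closure (by fun_prop) (by fun_prop)
  rw [closure_Ioi] at hEq2
  have hp : HasDerivAt (fun t : ℝ => ⟪gradient u (t • x), x⟫)
      ⟪fderiv ℝ (gradient u) 0 x, x⟫ 0 := by
    have h1 : HasDerivAt (fun t : ℝ => gradient u (t • x)) (fderiv ℝ (gradient u) 0 x) 0 := by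
      have := hgd ((0:ℝ) • x)
      have h2 := this.comp_hasDerivAt (0:ℝ) (hl 0)
      rw [zero_smul] at h2
      exact h2
    exact (h1.inner ℝ (hasDerivAt_const (0:ℝ) x)).congr_deriv (by simp)
  have hp2 : HasDerivAt (fun t : ℝ => 2 * (u x - k) * t) (2 * (u x - k)) 0 := by
    simpa using (hasDerivAt_id (0:ℝ)).const_mul (2 * (u x - k))
  have hfin := (uniqueDiffWithinAt_Ici (0:ℝ)).eq_deriv _ hp.hasDerivWithinAt
    (hp2.hasDerivWithinAt.congr hEq2 (hEq2 (Set.mem_Ici.2 le_rfl)))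
  have hsum : ⟪fderiv ℝ (gradient u) 0 x, x⟫ = ∑ i, ∑ j, Hess n u 0 i j * x i * x j := by
    rw [PiLp.inner_apply]
    refine Finset.sum_congr rfl fun i _ => ?_
    rw [bern_hess u hu]
    simp only [RCLike.inner_apply, conj_trivial]
    rw [Finset.mul_sum]
    refine Finset.sum_congr rfl fun j _ => ?_
    ring
  rw [← hsum, hfin]
  ring

theorem bernstein_tau_pi_div_four (n : ℕ) (hn : 1 ≤ n)
    (u : EuclideanSpace ℝ (Fin n) → ℝ)
    (hu : ContDiff ℝ 2 u)
    (heq : ∀ x, -Real.sqrt 2 * ∑ i, 1 / (1 + eigs (Hess n u x) i)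
      = -u x + (1/2) * ⟪x, gradient u x⟫)
    (hadm : (∀ x, (Hess n u x + 1).PosDef) ∨
      (∀ x, (-(1 : Matrix (Fin n) (Fin n) ℝ) - Hess n u x).PosDef)) :
    IsQuadPoly n u ∧
    ∃ (A : Matrix (Fin n) (Fin n) ℝ) (hA : A.IsHermitian),
      (∀ i, hA.eigenvalues i ≠ -1) ∧
      ∀ x, u x = Real.sqrt 2 * (∑ i, 1 / (1 + hA.eigenvalues i))
        + (1/2) * (∑ i, ∑ j, A i j * x i * x j) := by
  obtain ⟨k, hk⟩ := bern_const n hn u hu heq hadm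
  have hq := bern_quad u hu k hk
  have he : eigs (Hess n u 0) = (bern_hess_herm u hu 0).eigenvalues := by
    unfold eigs; rw [dif_pos (bern_hess_herm u hu 0)]
  refine ⟨⟨Hess n u 0, 0, k, ?_, fun x => ?_⟩, Hess n u 0, bern_hess_herm u hu 0, fun i => ?_,
    fun x => ?_⟩
  · ext i j
    exact bern_hess_symm u hu 0 j i
  · rw [hq x, inner_zero_left]; ring
  · rcases hadm with h | h
    · have := bern_eig_pos _ (bern_hess_herm u hu 0) (h 0) i
      intro h1
      rw [h1] at this
      norm_num at this
    · have := bern_eig_neg _ (bern_hess_herm u hu 0) (h 0) i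
      intro h1
      rw [h1] at this
      norm_num at this
  · rw [hq x]
    congr 1
    have h1 := heq 0
    have h2 := hk 0
    rw [← he]
    linarith
end
end

section
/- Let n ≥ 1, a > 1 and b = √(a² − 1). Let u : ℝⁿ → ℝ be a C² function satisfying (√(a²+1)/(2b)) · Σ_{i=1}^n ln((λ_i(D²u(x)) + a − b)/(λ_i(D²u(x)) + a + b)) = −u(x) + (1/2)⟨x, Du(x)⟩ for all x ∈ ℝⁿ, and suppose that either D²u(x) > −(a−b)I for every x ∈ ℝⁿ, or D²u(x) < −(a+b)I for every x ∈ ℝⁿ. Then u is a quadratic polynomial; more precisely, there exists a symmetric real n×n matrix A with eigenvalues λ̄₁, …, λ̄ₙ such that u(x) = −(√(a²+1)/(2b)) · Σ_{i=1}^n ln((λ̄_i + a − b)/(λ̄_i + a + b)) + (1/2)⟨x, Ax⟩ for all x ∈ ℝⁿ. -/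
open Real Filter Matrix
open scoped RealInnerProductSpace

noncomputable section

open Topology

section core

lemma aux_max_test {E : Type*} [NormedAddCommGroup E] [NormedSpace ℝ E]
    {f : E → ℝ} {f1 : E → E →L[ℝ] ℝ} {f2 : E →L[ℝ] E →L[ℝ] ℝ} {x0 : E}
    (h1 : ∀ x, HasFDerivAt f (f1 x) x) (h2 : HasFDerivAt f1 f2 x0)
    (hmax : IsLocalMax f x0) : f1 x0 = 0 ∧ ∀ v, f2 v v ≤ 0 := by
  have hz : f1 x0 = 0 := hmax.hasFDerivAt_eq_zero (h1 x0)
  refine ⟨hz, fun v => ?_⟩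
  by_contra hpos
  push Not at hpos
  have hline : ∀ t : ℝ, HasDerivAt (fun t : ℝ => x0 + t • v) v t := by
    intro t
    simpa using ((hasDerivAt_id t).smul_const v).const_add x0
  set g : ℝ → ℝ := fun t => f (x0 + t • v) with hg
  have hg1 : ∀ t, HasDerivAt g (f1 (x0 + t • v) v) t := fun t =>
    (h1 (x0 + t • v)).comp_hasDerivAt t (hline t)
  have hd : deriv g = fun t => f1 (x0 + t • v) v := funext fun t => (hg1 t).deriv
  have hg2 : HasDerivAt (deriv g) (f2 v v) 0 := by
    rw [hd]
    have h2' : HasFDerivAt f1 f2 (x0 + (0 : ℝ) • v) := by simpa using h2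
    have := h2'.comp_hasDerivAt (0 : ℝ) (hline 0)
    exact ((ContinuousLinearMap.apply ℝ ℝ v).hasFDerivAt).comp_hasDerivAt (0 : ℝ) this
  have hmin : IsLocalMin g 0 := by
    apply isLocalMin_of_deriv_deriv_pos
    · rw [hg2.deriv]; exact hpos
    · rw [hd]; simp [hz]
    · exact (hg1 0).continuousAt
  have hmax' : IsLocalMax g 0 := by
    have hc : ContinuousAt (fun t : ℝ => x0 + t • v) 0 := (hline 0).continuousAt
    have ht : Tendsto (fun t : ℝ => x0 + t • v) (𝓝 0) (𝓝 x0) := by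
      simpa [ContinuousAt] using hc
    have := ht.eventually hmax
    simpa [IsLocalMax, IsMaxFilter, hg] using this
  have hconst : g =ᶠ[𝓝 0] fun _ => g 0 := by
    filter_upwards [hmin, hmax'] with t h1 h2
    exact le_antisymm h2 h1
  have h3 : deriv g =ᶠ[𝓝 0] fun _ => (0 : ℝ) := by
    have := hconst.deriv
    simpa using this
  have h4 := h3.deriv_eq
  rw [hg2.deriv] at h4
  simp at h4
  linarith

lemma aux_scalar {k d m v : ℝ} (hk : 0 < k) (hd : 0 < d) (hm : 0 < m) (hv : 0 < v) :
    k * Real.log (v / (v + d)) ≤ k * Real.log (m / (m + d)) +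
      k * d / (m * (m + d)) * (v - m) := by
  have h1 : Real.log (v / (v + d)) - Real.log (m / (m + d)) ≤ d / (m * (m + d)) * (v - m) := by
    rw [← Real.log_div (by positivity) (by positivity)]
    refine (Real.log_le_sub_one_of_pos (by positivity)).trans ?_
    have : d / (m * (m + d)) * (v - m) - (v / (v + d) / (m / (m + d)) - 1) =
      d * (v - m) ^ 2 / (m * (m + d) * (v + d)) := by
      field_simp
      ring
    have h2 : 0 ≤ d * (v - m) ^ 2 / (m * (m + d) * (v + d)) := by positivity
    linarith
  have h2 := mul_le_mul_of_nonneg_left h1 hk.le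
  have h3 : k * d / (m * (m + d)) * (v - m) = k * (d / (m * (m + d)) * (v - m)) := by ring
  rw [h3]; linarith

lemma aux_quad {n : ℕ} (f : OrthonormalBasis (Fin n) ℝ (EuclideanSpace ℝ (Fin n)))
    (ν : Fin n → ℝ) (N : EuclideanSpace ℝ (Fin n) →L[ℝ] EuclideanSpace ℝ (Fin n) →L[ℝ] ℝ)
    (hN : ∀ j y, N (f j) y = ν j * ⟪f j, y⟫) (v : EuclideanSpace ℝ (Fin n)) :
    N v v = ∑ j, ν j * ⟪f j, v⟫ ^ 2 := by
  conv_lhs => rw [show N v = N (∑ j, ⟪f j, v⟫ • f j) by rw [f.sum_repr' v]]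
  rw [map_sum, _root_.sum_apply]
  refine Finset.sum_congr rfl fun j _ => ?_
  rw [map_smul, _root_.smul_apply, hN, smul_eq_mul]
  ring

lemma aux_concave {n : ℕ} {k d : ℝ} (hk : 0 < k) (hd : 0 < d)
    (e f : OrthonormalBasis (Fin n) ℝ (EuclideanSpace ℝ (Fin n)))
    (m ν : Fin n → ℝ) (hm : ∀ i, 0 < m i) (hν : ∀ i, 0 < ν i)
    (N : EuclideanSpace ℝ (Fin n) →L[ℝ] EuclideanSpace ℝ (Fin n) →L[ℝ] ℝ)
    (hN : ∀ j y, N (f j) y = ν j * ⟪f j, y⟫) :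
    ∑ j, k * Real.log (ν j / (ν j + d)) ≤ ∑ i, k * Real.log (m i / (m i + d)) +
      ∑ i, k * d / (m i * (m i + d)) * (N (e i) (e i) - m i) := by
  have hrow : ∀ i, ∑ j, ⟪f j, e i⟫ ^ 2 = 1 := fun i => by
    have := f.sum_sq_norm_inner_right (e i)
    simpa using this
  have hcol : ∀ j, ∑ i, ⟪f j, e i⟫ ^ 2 = 1 := fun j => by
    have := e.sum_sq_norm_inner_left (f j)
    simpa using this
  calc ∑ j, k * Real.log (ν j / (ν j + d))
      = ∑ j, ∑ i, ⟪f j, e i⟫ ^ 2 * (k * Real.log (ν j / (ν j + d))) := by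
        refine Finset.sum_congr rfl fun j _ => ?_
        rw [← Finset.sum_mul, hcol, one_mul]
    _ ≤ ∑ j, ∑ i, ⟪f j, e i⟫ ^ 2 * (k * Real.log (m i / (m i + d)) +
          k * d / (m i * (m i + d)) * (ν j - m i)) := by
        refine Finset.sum_le_sum fun j _ => Finset.sum_le_sum fun i _ => ?_
        exact mul_le_mul_of_nonneg_left (aux_scalar hk hd (hm i) (hν j)) (sq_nonneg _)
    _ = ∑ i, ∑ j, ⟪f j, e i⟫ ^ 2 * (k * Real.log (m i / (m i + d)) +
          k * d / (m i * (m i + d)) * (ν j - m i)) := Finset.sum_comm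
    _ = _ := by
        rw [← Finset.sum_add_distrib]
        refine Finset.sum_congr rfl fun i _ => ?_
        rw [aux_quad f ν N hN]
        have : ∀ j, ⟪f j, e i⟫ ^ 2 * (k * Real.log (m i / (m i + d)) +
          k * d / (m i * (m i + d)) * (ν j - m i)) =
          (k * Real.log (m i / (m i + d)) - k * d / (m i * (m i + d)) * m i) * ⟪f j, e i⟫ ^ 2
          + k * d / (m i * (m i + d)) * (ν j * ⟪f j, e i⟫ ^ 2) := fun j => by ring
        simp_rw [this]
        rw [Finset.sum_add_distrib, ← Finset.mul_sum, ← Finset.mul_sum, hrow]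
        ring


structure ShrinkData (n : ℕ) (k d : ℝ) (w : EuclideanSpace ℝ (Fin n) → ℝ)
    (w1 : EuclideanSpace ℝ (Fin n) → EuclideanSpace ℝ (Fin n) →L[ℝ] ℝ)
    (w2 : EuclideanSpace ℝ (Fin n) → EuclideanSpace ℝ (Fin n) →L[ℝ]
      EuclideanSpace ℝ (Fin n) →L[ℝ] ℝ)
    (e : EuclideanSpace ℝ (Fin n) → OrthonormalBasis (Fin n) ℝ (EuclideanSpace ℝ (Fin n)))
    (μ : EuclideanSpace ℝ (Fin n) → Fin n → ℝ) : Prop where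
  npos : 1 ≤ n
  kpos : 0 < k
  dpos : 0 < d
  h1 : ∀ x, HasFDerivAt w (w1 x) x
  h2 : ∀ x, HasFDerivAt w1 (w2 x) x
  hc : Continuous w2
  mpos : ∀ x i, 0 < μ x i
  heig : ∀ x i y, w2 x (e x i) y = μ x i * ⟪e x i, y⟫
  heq : ∀ x, ∑ i, k * Real.log (μ x i / (μ x i + d)) = - w x + (1/2) * w1 x x

namespace ShrinkData

variable {n : ℕ} {k d : ℝ} {w : EuclideanSpace ℝ (Fin n) → ℝ}
    {w1 : EuclideanSpace ℝ (Fin n) → EuclideanSpace ℝ (Fin n) →L[ℝ] ℝ}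
    {w2 : EuclideanSpace ℝ (Fin n) → EuclideanSpace ℝ (Fin n) →L[ℝ]
      EuclideanSpace ℝ (Fin n) →L[ℝ] ℝ}
    {e : EuclideanSpace ℝ (Fin n) → OrthonormalBasis (Fin n) ℝ (EuclideanSpace ℝ (Fin n))}
    {μ : EuclideanSpace ℝ (Fin n) → Fin n → ℝ}

lemma term_nonpos (H : ShrinkData n k d w w1 w2 e μ) (x : EuclideanSpace ℝ (Fin n)) (i : Fin n) :
    k * Real.log (μ x i / (μ x i + d)) ≤ 0 := by
  have h1 := H.mpos x i
  have h2 := H.dpos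
  apply mul_nonpos_of_nonneg_of_nonpos H.kpos.le
  apply Real.log_nonpos (by positivity)
  rw [div_le_one (by positivity)]
  linarith

lemma phi_nonpos (H : ShrinkData n k d w w1 w2 e μ) (x : EuclideanSpace ℝ (Fin n)) :
    - w x + (1/2) * w1 x x ≤ 0 := by
  rw [← H.heq]
  exact Finset.sum_nonpos fun i _ => H.term_nonpos x i

lemma cont_w (H : ShrinkData n k d w w1 w2 e μ) : Continuous w :=
  continuous_iff_continuousAt.2 fun x => (H.h1 x).continuousAt

lemma cont_w1 (H : ShrinkData n k d w w1 w2 e μ) : Continuous w1 :=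
  continuous_iff_continuousAt.2 fun x => (H.h2 x).continuousAt

lemma cont_phi (H : ShrinkData n k d w w1 w2 e μ) :
    Continuous (fun x => - w x + (1/2) * w1 x x) := by
  have h1 := H.cont_w
  have h2 := H.cont_w1
  fun_prop

lemma scale_deriv (H : ShrinkData n k d w w1 w2 e μ) (x : EuclideanSpace ℝ (Fin n))
    {s : ℝ} (hs : s ≠ 0) :
    HasDerivAt (fun s : ℝ => w (s • x) / s ^ 2)
      (2 * (- w (s • x) + (1/2) * w1 (s • x) (s • x)) / s ^ 3) s := by
  have hl : HasDerivAt (fun s : ℝ => s • x) x s := by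
    simpa using (hasDerivAt_id s).smul_const x
  have h := ((H.h1 (s • x)).comp_hasDerivAt s hl).div (hasDerivAt_pow 2 s) (pow_ne_zero 2 hs)
  refine h.congr_deriv ?_
  simp only [map_smul, smul_eq_mul, Function.comp]
  field_simp
  ring

lemma mu_eq (H : ShrinkData n k d w w1 w2 e μ) (x : EuclideanSpace ℝ (Fin n)) (i : Fin n) :
    w2 x (e x i) (e x i) = μ x i := by
  rw [H.heig]; simp

/-- comparison principle for the linearised operator -/
lemma comparison (H : ShrinkData n k d w w1 w2 e μ)
    {ψ : EuclideanSpace ℝ (Fin n) → ℝ}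
    {ψ1 : EuclideanSpace ℝ (Fin n) → EuclideanSpace ℝ (Fin n) →L[ℝ] ℝ}
    {ψ2 : EuclideanSpace ℝ (Fin n) → EuclideanSpace ℝ (Fin n) →L[ℝ]
      EuclideanSpace ℝ (Fin n) →L[ℝ] ℝ}
    (hψ1 : ∀ x, HasFDerivAt ψ (ψ1 x) x) (hψ2 : ∀ x, HasFDerivAt ψ1 (ψ2 x) x)
    {K S : Set (EuclideanSpace ℝ (Fin n))} (hK : IsCompact K)
    (hnhd : ∀ x ∈ K, x ∉ S → K ∈ 𝓝 x) {η c : ℝ} (hη : 0 < η)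
    (hL : ∀ x ∈ K, ∑ i, k * d / (μ x i * (μ x i + d)) * ψ2 x (e x i) (e x i)
      - (1/2) * ψ1 x x ≤ - η)
    (hS : ∀ x ∈ K, x ∈ S → (- w x + (1/2) * w1 x x) - ψ x ≤ c) :
    ∀ x ∈ K, (- w x + (1/2) * w1 x x) - ψ x ≤ c := by
  intro x0 hx0
  by_contra hcon
  push Not at hcon
  set φ : EuclideanSpace ℝ (Fin n) → ℝ := fun x => - w x + (1/2) * w1 x x with hφ
  have hφc : Continuous φ := H.cont_phi
  change c < φ x0 - ψ x0 at hcon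
  obtain ⟨ε, hε, hε1, hε2⟩ : ∃ ε > 0, 2 * ε < φ x0 - ψ x0 - c ∧ 2 * ε < η := by
    refine ⟨min ((φ x0 - ψ x0 - c) / 3) (η / 3), ?_, ?_, ?_⟩
    · apply lt_min <;> linarith
    · have := min_le_left ((φ x0 - ψ x0 - c) / 3) (η / 3); linarith
    · have := min_le_right ((φ x0 - ψ x0 - c) / 3) (η / 3); linarith
  have hA : ∀ᶠ s : ℝ in 𝓝 1, ∀ x ∈ K, |φ (s • x) / s ^ 3 - φ x| < ε := by
    apply hK.eventually_forall_of_forall_eventually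
    intro x _
    have : ContinuousAt (fun z : ℝ × EuclideanSpace ℝ (Fin n) =>
        |φ (z.1 • z.2) / z.1 ^ 3 - φ z.2|) (1, x) := by
      apply ContinuousAt.abs
      apply ContinuousAt.sub
      · apply ContinuousAt.div
        · fun_prop
        · fun_prop
        · simp
      · fun_prop
    exact this.eventually_lt continuousAt_const (by simpa using hε)
  have hB : ∀ᶠ s : ℝ in 𝓝 1, ∀ x ∈ K, |(s + 1) / (2 * s ^ 2) * φ (s • x) - φ x| < ε := by
    apply hK.eventually_forall_of_forall_eventually
    intro x _
    have : ContinuousAt (fun z : ℝ × EuclideanSpace ℝ (Fin n) =>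
        |(z.1 + 1) / (2 * z.1 ^ 2) * φ (z.1 • z.2) - φ z.2|) (1, x) := by
      apply ContinuousAt.abs
      apply ContinuousAt.sub
      · apply ContinuousAt.mul
        · apply ContinuousAt.div
          · fun_prop
          · fun_prop
          · simp
        · fun_prop
      · fun_prop
    refine this.eventually_lt continuousAt_const ?_
    norm_num
    exact hε
  obtain ⟨δ, hδ, hball⟩ := Metric.eventually_nhds_iff.1 (hA.and hB)
  set r : ℝ := 1 + δ / 2 with hr
  have hr1 : 1 < r := by linarith
  have hr0 : r ≠ 0 := by linarith
  have hrm : r - 1 ≠ 0 := by linarith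
  have hs : ∀ s, 1 ≤ s → s ≤ r → dist s 1 < δ := by
    intro s h1 h2
    rw [Real.dist_eq, abs_of_nonneg (by linarith)]
    linarith
  set p : EuclideanSpace ℝ (Fin n) → ℝ := fun x => (w (r • x) / r ^ 2 - w x) / (2 * (r - 1))
    with hp
  have hpφ : ∀ x ∈ K, |p x - φ x| < ε := by
    intro x hx
    obtain ⟨s, hsm, hse⟩ := exists_hasDerivAt_eq_slope (fun s : ℝ => w (s • x) / s ^ 2)
      (fun s => 2 * φ (s • x) / s ^ 3) hr1
      (fun s hs => (H.scale_deriv x (by have := hs.1; linarith)).continuousAt.continuousWithinAt)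
      (fun s hs => H.scale_deriv x (by have := hs.1; linarith))
    have : p x = φ (s • x) / s ^ 3 := by
      simp only [one_smul, one_pow, div_one] at hse
      have h2 : p x = (w (r • x) / r ^ 2 - w x) / (r - 1) / 2 := by
        simp only [hp]; field_simp
      rw [h2, ← hse]; ring
    rw [this]
    exact (hball (hs s hsm.1.le hsm.2.le)).1 x hx
  -- derivatives of `p`
  have hlin : ∀ x : EuclideanSpace ℝ (Fin n), HasFDerivAt (fun x : EuclideanSpace ℝ (Fin n) => r • x)
      (r • ContinuousLinearMap.id ℝ (EuclideanSpace ℝ (Fin n))) x := fun x =>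
    (hasFDerivAt_id x).const_smul r
  set p1 : EuclideanSpace ℝ (Fin n) → EuclideanSpace ℝ (Fin n) →L[ℝ] ℝ := fun x =>
    (1 / (2 * (r - 1))) • ((1 / r) • w1 (r • x) - w1 x) with hp1
  have hp1d : ∀ x, HasFDerivAt p (p1 x) x := by
    intro x
    have h := (((((H.h1 (r • x)).comp x (hlin x)).const_smul (1 / r ^ 2)).sub (H.h1 x)).const_smul
      (1 / (2 * (r - 1))))
    refine (h.congr_fderiv ?_).congr_of_eventuallyEq ?_
    · ext v
      simp [hp1]
      field_simp
      simp
    · refine Eventually.of_forall fun y => ?_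
      simp [hp]
      field_simp
  set p2 : EuclideanSpace ℝ (Fin n) → EuclideanSpace ℝ (Fin n) →L[ℝ]
      EuclideanSpace ℝ (Fin n) →L[ℝ] ℝ := fun x =>
    (1 / (2 * (r - 1))) • (w2 (r • x) - w2 x) with hp2
  have hp2d : ∀ x, HasFDerivAt p1 (p2 x) x := by
    intro x
    have h := (((((H.h2 (r • x)).comp x (hlin x)).const_smul (1 / r)).sub (H.h2 x)).const_smul
      (1 / (2 * (r - 1))))
    refine (h.congr_fderiv ?_)
    ext v v'
    simp [hp2]
    field_simp
    simp
  have hpc : Continuous p := continuous_iff_continuousAt.2 fun x => (hp1d x).continuousAt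
  have hψc : Continuous ψ := continuous_iff_continuousAt.2 fun x => (hψ1 x).continuousAt
  obtain ⟨x, hxK, hxmax⟩ := hK.exists_isMaxOn ⟨x0, hx0⟩ (hpc.sub hψc).continuousOn
  have hx0x := hxmax hx0
  change p x0 - ψ x0 ≤ p x - ψ x at hx0x
  have e1 := abs_lt.1 (hpφ x hxK)
  have e2 := abs_lt.1 (hpφ x0 hx0)
  have hxS : x ∉ S := by
    intro hxS
    have h3 := hS x hxK hxS
    change φ x - ψ x ≤ c at h3
    linarith [e1.1, e1.2, e2.1, e2.2]
  have hloc : IsLocalMax (fun y => p y - ψ y) x := hxmax.isLocalMax (hnhd x hxK hxS)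
  obtain ⟨hz1, hz2⟩ := aux_max_test (fun y => (hp1d y).sub (hψ1 y)) ((hp2d x).sub (hψ2 x)) hloc
  have hconc := aux_concave H.kpos H.dpos (e x) (e (r • x)) (μ x) (μ (r • x)) (H.mpos x)
    (H.mpos (r • x)) (w2 (r • x)) (H.heig (r • x))
  rw [H.heq, H.heq] at hconc
  change φ (r • x) ≤ φ x + _ at hconc
  have hle : ∑ i, k * d / (μ x i * (μ x i + d)) * (w2 (r • x) (e x i) (e x i) - μ x i) ≤
      (2 * (r - 1)) * ∑ i, k * d / (μ x i * (μ x i + d)) * ψ2 x (e x i) (e x i) := by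
    rw [Finset.mul_sum]
    refine Finset.sum_le_sum fun i _ => ?_
    have h3 := hz2 (e x i)
    simp only [hp2, _root_.sub_apply, _root_.smul_apply, smul_eq_mul, H.mu_eq] at h3
    have hm := H.mpos x i
    have hk := H.kpos
    have hd := H.dpos
    have h4 : w2 (r • x) (e x i) (e x i) - μ x i ≤ (2 * (r - 1)) * ψ2 x (e x i) (e x i) := by
      have h5 : 1 / (2 * (r - 1)) * (w2 (r • x) (e x i) (e x i) - μ x i) ≤ ψ2 x (e x i) (e x i) := by
        linarith
      rw [one_div, inv_mul_le_iff₀ (by linarith)] at h5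
      exact h5
    have h6 := mul_le_mul_of_nonneg_left h4
      (show 0 ≤ k * d / (μ x i * (μ x i + d)) by positivity)
    linarith
  have hz1x : p1 x x = ψ1 x x := by
    have := congrArg (fun T => T x) hz1
    simp only [_root_.sub_apply, _root_.zero_apply] at this
    linarith
  have hLx := hL x hxK
  have key : φ (r • x) - φ x = (2 * (r - 1)) *
      (-p x + (1/2) * p1 x x + (r + 1) / (2 * r ^ 2) * φ (r • x)) := by
    simp only [hp, hp1, hφ, _root_.sub_apply, _root_.smul_apply, smul_eq_mul, map_smul]
    field_simp
    ring
  have e3 := abs_lt.1 ((hball (hs r hr1.le le_rfl)).2 x hxK)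
  have h7 : (2 * (r - 1)) * (-p x + (1/2) * p1 x x + (r + 1) / (2 * r ^ 2) * φ (r • x)) ≤
      (2 * (r - 1)) * ∑ i, k * d / (μ x i * (μ x i + d)) * ψ2 x (e x i) (e x i) := by
    linarith
  have h8 := le_of_mul_le_mul_left h7 (by linarith)
  rw [hz1x] at h8
  linarith [e1.1, e1.2, e3.1, e3.2]

lemma quad_pos (H : ShrinkData n k d w w1 w2 e μ) (x v : EuclideanSpace ℝ (Fin n)) (hv : v ≠ 0) :
    0 < w2 x v v := by
  rw [aux_quad (e x) (μ x) (w2 x) (H.heig x)]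
  have hs : ∑ i, ⟪e x i, v⟫ ^ 2 = ‖v‖ ^ 2 := by
    simpa using (e x).sum_sq_norm_inner_right v
  have hnn : ∀ i ∈ Finset.univ, 0 ≤ μ x i * ⟪e x i, v⟫ ^ 2 := fun i _ =>
    mul_nonneg (H.mpos x i).le (sq_nonneg _)
  refine lt_of_le_of_ne (Finset.sum_nonneg hnn) fun h0 => ?_
  have h1 := (Finset.sum_eq_zero_iff_of_nonneg hnn).1 h0.symm
  have h2 : ∑ i, ⟪e x i, v⟫ ^ 2 = 0 := Finset.sum_eq_zero fun i hi =>
    (mul_eq_zero.1 (h1 i hi)).resolve_left (H.mpos x i).ne'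
  rw [h2] at hs
  have : 0 < ‖v‖ := norm_pos_iff.2 hv
  nlinarith

lemma tangent_strict (H : ShrinkData n k d w w1 w2 e μ) (x v : EuclideanSpace ℝ (Fin n))
    (hv : v ≠ 0) : w x + w1 x v < w (x + v) := by
  have hline : ∀ t : ℝ, HasDerivAt (fun t : ℝ => x + t • v) v t := by
    intro t
    simpa using ((hasDerivAt_id t).smul_const v).const_add x
  have hg1 : ∀ t, HasDerivAt (fun t : ℝ => w (x + t • v)) (w1 (x + t • v) v) t := fun t =>
    (H.h1 (x + t • v)).comp_hasDerivAt t (hline t)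
  have hg2 : ∀ t, HasDerivAt (fun t : ℝ => w1 (x + t • v) v) (w2 (x + t • v) v v) t := by
    intro t
    have := (H.h2 (x + t • v)).comp_hasDerivAt t (hline t)
    exact ((ContinuousLinearMap.apply ℝ ℝ v).hasFDerivAt).comp_hasDerivAt t this
  have hmono : StrictMono (fun t : ℝ => w1 (x + t • v) v) := by
    apply strictMono_of_deriv_pos
    intro t
    rw [(hg2 t).deriv]
    exact H.quad_pos _ _ hv
  obtain ⟨c, hc, hce⟩ := exists_hasDerivAt_eq_slope (fun t : ℝ => w (x + t • v))
    (fun t : ℝ => w1 (x + t • v) v) (zero_lt_one)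
    (fun s _ => (hg1 s).continuousAt.continuousWithinAt) (fun s _ => hg1 s)
  have := hmono hc.1
  simp at this hce
  linarith

lemma tangent (H : ShrinkData n k d w w1 w2 e μ) (x v : EuclideanSpace ℝ (Fin n)) :
    w x + w1 x v ≤ w (x + v) := by
  by_cases hv : v = 0
  · simp [hv]
  · exact (H.tangent_strict x v hv).le

lemma w_nonneg (H : ShrinkData n k d w w1 w2 e μ) (x : EuclideanSpace ℝ (Fin n)) : 0 ≤ w x := by
  have hanti : AntitoneOn (fun s : ℝ => w (s • x) / s ^ 2) (Set.Ici 1) := by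
    apply antitoneOn_of_deriv_nonpos (convex_Ici 1)
    · intro s hs
      exact (H.scale_deriv x (by have : (1:ℝ) ≤ s := hs; linarith)).continuousAt.continuousWithinAt
    · intro s hs
      rw [interior_Ici] at hs
      exact (H.scale_deriv x (by have : (1:ℝ) < s := hs; linarith)).differentiableAt.differentiableWithinAt
    · intro s hs
      rw [interior_Ici] at hs
      have hs' : (1:ℝ) < s := hs
      rw [(H.scale_deriv x (by linarith)).deriv]
      apply div_nonpos_of_nonpos_of_nonneg
      · have := H.phi_nonpos (s • x)
        linarith
      · positivity
  by_contra hneg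
  push Not at hneg
  set A := |w 0| + |w1 0 x| with hA
  have hA0 : 0 ≤ A := by positivity
  set s : ℝ := A / (- w x) + 1 with hs
  have hs1 : 1 ≤ s := by
    have : 0 ≤ A / (- w x) := div_nonneg hA0 (by linarith)
    linarith
  have h1 := hanti (Set.mem_Ici.2 le_rfl) (Set.mem_Ici.2 hs1) hs1
  simp only [one_smul, one_pow, div_one] at h1
  rw [div_le_iff₀ (by positivity)] at h1
  have h2 := H.tangent 0 (s • x)
  simp only [map_smul, smul_eq_mul, zero_add] at h2
  have h3 : s * (- w x) = A + (- w x) := by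
    rw [hs]; field_simp [hneg.ne]; ring
  have h4 : -|w 0| ≤ w 0 := neg_abs_le _
  have h5 : -|w1 0 x| ≤ w1 0 x := neg_abs_le _
  have h6 : s * (-|w1 0 x|) ≤ s * w1 0 x := mul_le_mul_of_nonneg_left h5 (by linarith)
  have h7 : |w 0| ≤ s * |w 0| := by nlinarith [abs_nonneg (w 0)]
  have h8 : s * (s * (- w x)) ≤ s * A := by nlinarith
  have h9 := le_of_mul_le_mul_left h8 (by linarith)
  linarith

lemma growth (H : ShrinkData n k d w w1 w2 e μ) :
    ∃ c > 0, ∀ x : EuclideanSpace ℝ (Fin n), 1 ≤ ‖x‖ → c * ‖x‖ ≤ w x - w 0 - w1 0 x := by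
  have hcomp : IsCompact (Metric.sphere (0 : EuclideanSpace ℝ (Fin n)) 1) := isCompact_sphere _ _
  have hne : (Metric.sphere (0 : EuclideanSpace ℝ (Fin n)) 1).Nonempty :=
    ⟨EuclideanSpace.single ⟨0, H.npos⟩ 1, by simp⟩
  have hcont : Continuous fun x => w x - w 0 - w1 0 x := by
    have := H.cont_w
    fun_prop
  obtain ⟨z, hz, hmin⟩ := hcomp.exists_isMinOn hne hcont.continuousOn
  refine ⟨w z - w 0 - w1 0 z, ?_, ?_⟩
  · have hz0 : z ≠ 0 := by
      rintro rfl; simp at hz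
    have := H.tangent_strict 0 z hz0
    rw [zero_add] at this
    linarith
  · intro x hx
    have hxp : 0 < ‖x‖ := by linarith
    set y := (‖x‖⁻¹) • x with hy
    have hyS : y ∈ Metric.sphere (0 : EuclideanSpace ℝ (Fin n)) 1 := by
      simp [hy, norm_smul, hxp.ne']
    have h1 : w z - w 0 - w1 0 z ≤ w y - w 0 - w1 0 y := hmin hyS
    have hxy : x = ‖x‖ • y := by
      rw [hy, smul_smul, mul_inv_cancel₀ hxp.ne', one_smul]
    have h2 := H.tangent y (-y)
    have h3 := H.tangent y ((‖x‖ - 1) • y)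
    have h4 : y + (‖x‖ - 1) • y = x := by
      conv_rhs => rw [hxy]
      rw [sub_smul, one_smul]; abel
    rw [h4] at h3
    simp only [add_neg_cancel, map_neg, map_smul, smul_eq_mul] at h2 h3
    have h5 : w1 0 x = ‖x‖ * w1 0 y := by
      conv_lhs => rw [hxy]
      simp
    rw [h5]
    nlinarith

lemma attain (H : ShrinkData n k d w w1 w2 e μ) :
    ∃ z, ∀ x, - w x + (1/2) * w1 x x ≤ - w z + (1/2) * w1 z z := by
  obtain ⟨c, hc, hgr⟩ := H.growth
  have hk := H.kpos
  have hd := H.dpos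
  have hw0 := H.w_nonneg 0
  set R : ℝ := 1 + 2 * (2 * n * k + w 0 + 1) / c with hR
  have hR1 : 1 ≤ R := by
    have : 0 ≤ 2 * (2 * n * k + w 0 + 1) / c := by positivity
    linarith
  obtain ⟨z, hz, hzmax⟩ := (isCompact_closedBall (0 : EuclideanSpace ℝ (Fin n)) R).exists_isMaxOn
    ⟨0, by simp; linarith⟩ H.cont_phi.continuousOn
  refine ⟨z, fun x => ?_⟩
  set m := - w z + (1/2) * w1 z z with hm
  by_cases hxR : ‖x‖ ≤ R
  · exact hzmax (by simpa using hxR)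
  push Not at hxR
  have hBpos : ∀ x : EuclideanSpace ℝ (Fin n), 1 ≤ ‖x‖ → c * ‖x‖ ≤ 2 * w x - w1 0 x := by
    intro x hx
    have h1 := hgr x hx
    have h2 := H.w_nonneg x
    linarith
  have hmain : ∀ δ : ℝ, 0 < δ → - w x + (1/2) * w1 x x ≤ m + δ * (2 * w x - w1 0 x) := by
    intro δ hδ
    set R' : ℝ := ‖x‖ + |m| / (δ * c) with hR'
    have hR'x : ‖x‖ ≤ R' := by
      have : 0 ≤ |m| / (δ * c) := by positivity
      linarith
    have hψ1 : ∀ x, HasFDerivAt (fun x => δ * (2 * w x - w1 0 x))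
        (δ • ((2 : ℝ) • w1 x - w1 0)) x := fun x =>
      (((H.h1 x).const_smul (2 : ℝ)).sub (w1 0).hasFDerivAt).const_smul δ
    have hψ2 : ∀ x, HasFDerivAt (fun x => δ • ((2 : ℝ) • w1 x - w1 0))
        (δ • ((2 : ℝ) • w2 x)) x := fun x =>
      (((H.h2 x).const_smul (2 : ℝ)).sub_const (w1 0)).const_smul δ
    have hK : IsCompact {y : EuclideanSpace ℝ (Fin n) | R ≤ ‖y‖ ∧ ‖y‖ ≤ R'} := by
      have hcl : IsClosed {y : EuclideanSpace ℝ (Fin n) | R ≤ ‖y‖} :=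
        isClosed_le continuous_const continuous_norm
      refine ((isCompact_closedBall (0 : EuclideanSpace ℝ (Fin n)) R').inter_left hcl).of_isClosed_subset
        (hcl.inter (isClosed_le continuous_norm continuous_const)) ?_
      rintro y ⟨h1, h2⟩
      exact ⟨h1, by simpa using h2⟩
    have := H.comparison hψ1 hψ2 hK (S := {y | ‖y‖ = R ∨ ‖y‖ = R'}) (η := δ) (c := m) ?_ hδ ?_ ?_
      x ⟨hxR.le, hR'x⟩
    · linarith
    · rintro y ⟨h1, h2⟩ h3
      have h3' : ¬ (‖y‖ = R ∨ ‖y‖ = R') := h3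
      push Not at h3'
      have hopen : IsOpen {y : EuclideanSpace ℝ (Fin n) | R < ‖y‖ ∧ ‖y‖ < R'} :=
        (isOpen_lt continuous_const continuous_norm).inter (isOpen_lt continuous_norm continuous_const)
      refine Filter.mem_of_superset (hopen.mem_nhds ⟨lt_of_le_of_ne h1 (Ne.symm h3'.1),
        lt_of_le_of_ne h2 h3'.2⟩) ?_
      rintro v ⟨h4, h5⟩
      exact ⟨h4.le, h5.le⟩
    · rintro y ⟨h1, h2⟩
      simp only [_root_.sub_apply, _root_.smul_apply, smul_eq_mul, H.mu_eq]
      have hsum : ∑ i, k * d / (μ y i * (μ y i + d)) * (δ * (2 * μ y i)) ≤ n * (2 * k * δ) := by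
        calc _ ≤ ∑ i : Fin n, 2 * k * δ := by
              refine Finset.sum_le_sum fun i _ => ?_
              have hmu := H.mpos y i
              rw [div_mul_eq_mul_div, div_le_iff₀ (by positivity)]
              have : 0 ≤ k * δ * μ y i * μ y i := by positivity
              nlinarith
          _ = _ := by simp
      have h3 := H.tangent y (-y)
      simp only [add_neg_cancel, map_neg] at h3
      have h4 := hgr y (hR1.trans h1)
      have h5 := H.w_nonneg y
      have h6 : 2 * (2 * n * k + w 0 + 1) ≤ c * ‖y‖ := by
        have : 2 * (2 * n * k + w 0 + 1) / c ≤ ‖y‖ := by linarith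
        rw [div_le_iff₀ hc] at this
        linarith
      have h7 : 2 * n * k - (w1 y y - (1/2) * w1 0 y) ≤ -1 := by nlinarith
      have h8 := mul_le_mul_of_nonneg_left h7 hδ.le
      nlinarith
    · rintro y ⟨h1, h2⟩ h3
      have hB := hBpos y (hR1.trans h1)
      have hB0 : 0 ≤ c * ‖y‖ := by positivity
      have h3' : ‖y‖ = R ∨ ‖y‖ = R' := h3
      rcases h3' with h3 | h3
      · have : - w y + (1/2) * w1 y y ≤ m := hzmax (by simp [h3])
        nlinarith
      · have h4 := H.phi_nonpos y
        have h5 : |m| ≤ δ * (c * ‖y‖) := by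
          have : |m| / (δ * c) ≤ ‖y‖ := by rw [h3, hR']; linarith [norm_nonneg x]
          rw [div_le_iff₀ (by positivity)] at this
          linarith
        have h6 := mul_le_mul_of_nonneg_left hB hδ.le
        have h7 := neg_abs_le m
        linarith
  by_contra hcon
  push Not at hcon
  set B := 2 * w x - w1 0 x with hB
  have hBp : 0 < B := by
    have := hBpos x (by linarith)
    have h2 : 0 < c * ‖x‖ := mul_pos hc (by linarith)
    linarith
  have := hmain ((- w x + (1/2) * w1 x x - m) / (2 * B)) (div_pos (by linarith) (by linarith))
  have h2 : (- w x + (1/2) * w1 x x - m) / (2 * B) * B = (- w x + (1/2) * w1 x x - m) / 2 := by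
    field_simp
  linarith

lemma eig_bounds (H : ShrinkData n k d w w1 w2 e μ) {K : Set (EuclideanSpace ℝ (Fin n))}
    (hK : IsCompact K) :
    ∃ θ > 0, ∃ Θ > 0, ∀ x ∈ K, ∀ i, θ ≤ k * d / (μ x i * (μ x i + d)) ∧
      k * d / (μ x i * (μ x i + d)) ≤ Θ := by
  have hk := H.kpos
  have hd := H.dpos
  have hcn : Continuous fun p : EuclideanSpace ℝ (Fin n) × EuclideanSpace ℝ (Fin n) =>
      w2 p.1 p.2 p.2 :=
    ((H.hc.comp continuous_fst).clm_apply continuous_snd).clm_apply continuous_snd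
  obtain ⟨M, hM⟩ := (hK.prod (isCompact_sphere (0 : EuclideanSpace ℝ (Fin n)) 1)).exists_bound_of_continuousOn
    hcn.continuousOn
  obtain ⟨C, hC⟩ := hK.exists_bound_of_continuousOn H.cont_phi.continuousOn
  set q := Real.exp (-C / k) with hq
  have hq0 : 0 < q := Real.exp_pos _
  refine ⟨k * d / ((|M| + 1) * (|M| + 1 + d)), by positivity,
    k * d / ((q * d) * (q * d + d)), by positivity, fun x hx i => ?_⟩
  have hmu := H.mpos x i
  have hup : μ x i ≤ |M| + 1 := by
    rw [← H.mu_eq x i]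
    have h3 : ‖e x i‖ = 1 := (e x).norm_eq_one i
    have h1 := hM (x, e x i) ⟨hx, by simpa using h3⟩
    rw [Real.norm_eq_abs] at h1
    have h4 := le_abs_self (w2 x (e x i) (e x i))
    have h5 : |w2 x (e x i) (e x i)| ≤ M := h1
    linarith [le_abs_self M]
  have hlow : q * d ≤ μ x i := by
    have h1 := hC x hx
    rw [Real.norm_eq_abs] at h1
    have h2 := (abs_le.1 h1).1
    rw [← H.heq] at h2
    have h3 : ∑ j, k * Real.log (μ x j / (μ x j + d)) ≤ k * Real.log (μ x i / (μ x i + d)) := by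
      have := Finset.single_le_sum (f := fun j => -(k * Real.log (μ x j / (μ x j + d))))
        (fun j _ => by have := H.term_nonpos x j; linarith) (Finset.mem_univ i)
      rw [Finset.sum_neg_distrib] at this
      linarith
    have h4 : -C / k ≤ Real.log (μ x i / (μ x i + d)) := by
      rw [div_le_iff₀ hk]; linarith
    have h5 : q ≤ μ x i / (μ x i + d) := by
      rw [hq]
      exact (Real.le_log_iff_exp_le (by positivity)).1 h4
    rw [le_div_iff₀ (by positivity)] at h5
    nlinarith
  constructor
  · gcongr
  · gcongr

end ShrinkData

/-- the inner product as a continuous bilinear map -/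
def innerB (n : ℕ) : EuclideanSpace ℝ (Fin n) →L[ℝ] EuclideanSpace ℝ (Fin n) →L[ℝ] ℝ :=
  LinearMap.mkContinuous₂ (innerₗ (EuclideanSpace ℝ (Fin n))) 1 (by
    intro x y
    simpa using norm_inner_le_norm (𝕜 := ℝ) x y)

lemma innerB_apply {n : ℕ} (x y : EuclideanSpace ℝ (Fin n)) : innerB n x y = ⟪x, y⟫ := by
  simp [innerB]

lemma innerB_deriv {n : ℕ} (y x : EuclideanSpace ℝ (Fin n)) :
    HasFDerivAt (fun x => ‖x - y‖ ^ 2) ((2 : ℝ) • innerB n (x - y)) x := by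
  have := ((hasFDerivAt_id x).sub_const y).norm_sq
  refine this.congr_fderiv ?_
  ext v
  simp [innerB_apply]

lemma innerB_deriv2 {n : ℕ} (y x : EuclideanSpace ℝ (Fin n)) :
    HasFDerivAt (fun x => innerB n (x - y)) (innerB n) x := by
  have := (innerB n).hasFDerivAt.comp x ((hasFDerivAt_id x).sub_const y)
  exact this

lemma aux_compact_lt {X : Type*} [TopologicalSpace X] {S : Set X} (hS : IsCompact S) {f : X → ℝ}
    (hf : Continuous f) {m : ℝ} (h : ∀ x ∈ S, f x < m) : ∃ c < m, ∀ x ∈ S, f x ≤ c := by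
  rcases S.eq_empty_or_nonempty with rfl | hne
  · exact ⟨m - 1, by linarith, by simp⟩
  · obtain ⟨z, hz, hm⟩ := hS.exists_isMaxOn hne hf.continuousOn
    exact ⟨f z, h z hz, fun x hx => hm hx⟩

namespace ShrinkData

variable {n : ℕ} {k d : ℝ} {w : EuclideanSpace ℝ (Fin n) → ℝ}
    {w1 : EuclideanSpace ℝ (Fin n) → EuclideanSpace ℝ (Fin n) →L[ℝ] ℝ}
    {w2 : EuclideanSpace ℝ (Fin n) → EuclideanSpace ℝ (Fin n) →L[ℝ]
      EuclideanSpace ℝ (Fin n) →L[ℝ] ℝ}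
    {e : EuclideanSpace ℝ (Fin n) → OrthonormalBasis (Fin n) ℝ (EuclideanSpace ℝ (Fin n))}
    {μ : EuclideanSpace ℝ (Fin n) → Fin n → ℝ}

set_option maxHeartbeats 1000000 in
lemma phi_const (H : ShrinkData n k d w w1 w2 e μ) :
    ∃ m, ∀ x, - w x + (1/2) * w1 x x = m := by
  obtain ⟨z0, hz0⟩ := H.attain
  set φ : EuclideanSpace ℝ (Fin n) → ℝ := fun x => - w x + (1/2) * w1 x x with hφ
  have hφc : Continuous φ := H.cont_phi
  set m := φ z0 with hm
  have hmax : ∀ x, φ x ≤ m := hz0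
  refine ⟨m, fun y0 => ?_⟩
  by_contra hy0
  change φ y0 ≠ m at hy0
  have hcl : IsClosed {x | φ x = m} := isClosed_eq hφc continuous_const
  obtain ⟨z, hz, hzd⟩ := hcl.exists_infDist_eq_dist ⟨z0, rfl⟩ y0
  have hzm : φ z = m := hz
  have hfar : ∀ x, φ x = m → dist y0 z ≤ dist y0 x := by
    intro x hx
    rw [← hzd]
    exact Metric.infDist_le_dist_of_mem hx
  have hyz : y0 ≠ z := by rintro rfl; exact hy0 hzm
  set v := (1/2 : ℝ) • (z - y0) with hv
  set y := y0 + v with hy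
  have hzy : z - y = v := by rw [hy, hv]; module
  have hy0y : y0 - y = -v := by rw [hy]; abel
  set ρ := ‖v‖ with hρ
  have hv0 : v ≠ 0 := by
    rw [hv]
    exact smul_ne_zero (by norm_num) (sub_ne_zero.2 (Ne.symm hyz))
  have hρ0 : 0 < ρ := norm_pos_iff.2 hv0
  have hdist : dist y0 z = 2 * ρ := by
    rw [dist_comm, dist_eq_norm, show z - y0 = (2 : ℝ) • v by rw [hv]; module, norm_smul]
    simp [hρ]
  have huniq : ∀ x, ‖x - y‖ ≤ ρ → φ x = m → x = z := by
    intro x hx hxm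
    have h1 := hfar x hxm
    rw [hdist, dist_comm, dist_eq_norm] at h1
    have hpl := parallelogram_law_with_norm ℝ (x - y) v
    have h2 : x - y + v = x - y0 := by rw [hy]; abel
    have h3 : x - y - v = x - z := by rw [← hzy]; abel
    rw [h2, h3] at hpl
    have h4 : ‖x - z‖ * ‖x - z‖ ≤ 0 := by nlinarith [norm_nonneg (x - y)]
    have h5 : ‖x - z‖ = 0 := by nlinarith [norm_nonneg (x - z)]
    exact sub_eq_zero.1 (norm_eq_zero.1 h5)
  have hKc : IsCompact (Metric.closedBall z (ρ / 2)) := isCompact_closedBall _ _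
  have hSc : IsCompact (Metric.sphere z (ρ / 2)) := isCompact_sphere _ _
  obtain ⟨θ, hθ, Θ, hΘ, hbd⟩ := H.eig_bounds hKc
  obtain ⟨D, hD⟩ := hKc.exists_bound_of_continuousOn
    (f := fun x => ⟪x - y, x⟫) (by fun_prop)
  -- strictness on the inner part of the sphere
  obtain ⟨m', hm', hT⟩ := aux_compact_lt (S := Metric.sphere z (ρ / 2) ∩ Metric.closedBall y ρ)
    (hSc.inter_right Metric.isClosed_closedBall) hφc (m := m) (by
      rintro x ⟨hx1, hx2⟩
      refine lt_of_le_of_ne (hmax x) fun hxm => ?_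
      have : x = z := huniq x (by simpa [dist_eq_norm] using hx2) hxm
      rw [this] at hx1
      simp at hx1
      linarith)
  set ε := (m - m') / 2 with hε
  have hε0 : 0 < ε := by rw [hε]; linarith
  set α := (2 * n * Θ + |D| + 1) / (θ * ρ ^ 2) with hα
  have hα0 : 0 < α := by positivity
  set G : EuclideanSpace ℝ (Fin n) → ℝ := fun x => Real.exp (-α * ‖x - y‖ ^ 2) with hG
  set ψ : EuclideanSpace ℝ (Fin n) → ℝ := fun x => (-ε) * (G x - Real.exp (-α * ρ ^ 2)) with hψ
  have hG1 : ∀ x, HasFDerivAt G (G x • ((-α) • ((2 : ℝ) • innerB n (x - y)))) x := fun x =>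
    ((innerB_deriv y x).const_smul (-α)).exp
  set ψ1 : EuclideanSpace ℝ (Fin n) → EuclideanSpace ℝ (Fin n) →L[ℝ] ℝ := fun x =>
    (-ε) • (G x • ((-α) • ((2 : ℝ) • innerB n (x - y)))) with hψ1
  have hdψ_one : ∀ x, HasFDerivAt ψ (ψ1 x) x := fun x =>
    ((hG1 x).sub_const _).const_smul (-ε)
  set ψ2 : EuclideanSpace ℝ (Fin n) → EuclideanSpace ℝ (Fin n) →L[ℝ]
      EuclideanSpace ℝ (Fin n) →L[ℝ] ℝ := fun x =>
    (-ε) • (G x • ((-α) • ((2 : ℝ) • innerB n)) +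
      (G x • ((-α) • ((2 : ℝ) • innerB n (x - y)))).smulRight
        ((-α) • ((2 : ℝ) • innerB n (x - y)))) with hψ2
  have hdψ_two : ∀ x, HasFDerivAt ψ1 (ψ2 x) x := fun x =>
    ((hG1 x).smul (((innerB_deriv2 y x).const_smul (2 : ℝ)).const_smul (-α))).const_smul (-ε)
  have hGc : Continuous G := by fun_prop
  have hψc : Continuous ψ := by fun_prop
  obtain ⟨c, hcm, hc⟩ := aux_compact_lt (S := Metric.sphere z (ρ / 2)) hSc
    (f := fun x => φ x - ψ x) (hφc.sub hψc) (m := m) (by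
      intro x hx
      have hG0 : 0 < Real.exp (-α * ρ ^ 2) := Real.exp_pos _
      by_cases hxy : ‖x - y‖ ≤ ρ
      · have h1 := hT x ⟨hx, by simpa [dist_eq_norm] using hxy⟩
        have h2 : G x ≤ 1 := by
          apply Real.exp_le_one_iff.2
          have : 0 ≤ α * ‖x - y‖ ^ 2 := by positivity
          linarith
        have h3 : ε * (G x - Real.exp (-α * ρ ^ 2)) ≤ ε * 1 :=
          mul_le_mul_of_nonneg_left (by linarith) hε0.le
        simp only [hψ]
        linarith
      · push Not at hxy
        have h2 : G x < Real.exp (-α * ρ ^ 2) := by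
          apply Real.exp_lt_exp.2
          have h4 : ρ ^ 2 < ‖x - y‖ ^ 2 := by nlinarith
          nlinarith
        have h3 : 0 < ε * (Real.exp (-α * ρ ^ 2) - G x) := mul_pos hε0 (by linarith)
        have h4 := hmax x
        simp only [hψ]
        linarith)
  have hη : 0 < ε * α * Real.exp (-α * (2 * ρ) ^ 2) := by positivity
  have hfin := H.comparison hdψ_one hdψ_two hKc (S := Metric.sphere z (ρ / 2)) (c := c) ?_ hη ?_ ?_
    z (by simp; linarith)
  · change φ z - ψ z ≤ c at hfin
    have : ψ z = 0 := by
      simp [hψ, hG, hzy, ← hρ]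
    rw [this, hzm] at hfin
    linarith
  · intro x hx hxS
    refine Metric.closedBall_mem_nhds_of_mem ?_
    have h1 : dist x z ≤ ρ / 2 := hx
    have h2 : dist x z ≠ ρ / 2 := hxS
    exact lt_of_le_of_ne h1 h2
  · intro x hx
    have hxz : ‖x - z‖ ≤ ρ / 2 := by simpa [dist_eq_norm] using hx
    have hxy1 : ρ / 2 ≤ ‖x - y‖ := by
      have h1 : ‖v‖ ≤ ‖x - y‖ + ‖x - z‖ := by
        have := norm_sub_le (x - y) (x - z)
        rwa [show x - y - (x - z) = v by rw [← hzy]; abel] at this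
      linarith
    have hxy2 : ‖x - y‖ ≤ 2 * ρ := by
      have := norm_add_le (x - z) v
      rw [show x - z + v = x - y by rw [← hzy]; abel] at this
      linarith
    have hGx : Real.exp (-α * (2 * ρ) ^ 2) ≤ G x := by
      apply Real.exp_le_exp.2
      have : ‖x - y‖ ^ 2 ≤ (2 * ρ) ^ 2 := by gcongr
      nlinarith
    have hterm : ∀ i, ψ2 x (e x i) (e x i) =
        (-ε) * (G x * (4 * α ^ 2 * ⟪e x i, x - y⟫ ^ 2 - 2 * α)) := by
      intro i
      change (-ε) * (G x * ((-α) * (2 * innerB n (e x i) (e x i))) +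
        (G x * ((-α) * (2 * innerB n (x - y) (e x i)))) *
          ((-α) * (2 * innerB n (x - y) (e x i)))) = _
      rw [innerB_apply, innerB_apply, real_inner_self_eq_norm_sq, (e x).norm_eq_one i,
        real_inner_comm]
      ring
    have hterm1 : ψ1 x x = (-ε) * (G x * (- 2 * α * ⟪x - y, x⟫)) := by
      change (-ε) * (G x * ((-α) * (2 * innerB n (x - y) x))) = _
      rw [innerB_apply]
      ring
    set γ : Fin n → ℝ := fun i => k * d / (μ x i * (μ x i + d)) with hγ
    have hs : ∑ i, ⟪e x i, x - y⟫ ^ 2 = ‖x - y‖ ^ 2 := by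
      simpa using (e x).sum_sq_norm_inner_right (x - y)
    have hsum1 : θ * ‖x - y‖ ^ 2 ≤ ∑ i, γ i * ⟪e x i, x - y⟫ ^ 2 := by
      rw [← hs, Finset.mul_sum]
      exact Finset.sum_le_sum fun i _ => mul_le_mul_of_nonneg_right (hbd x hx i).1 (sq_nonneg _)
    have hsum2 : ∑ i, γ i ≤ n * Θ := by
      calc ∑ i, γ i ≤ ∑ i : Fin n, Θ := Finset.sum_le_sum fun i _ => (hbd x hx i).2
        _ = _ := by simp
    have hinner : -|D| ≤ ⟪x - y, x⟫ := by
      have h1 := hD x hx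
      rw [Real.norm_eq_abs] at h1
      linarith [(abs_le.1 h1).1, le_abs_self D]
    have hexp : ∑ i, γ i * ψ2 x (e x i) (e x i) - (1/2) * ψ1 x x =
        (-ε) * (G x * (α * (4 * α * ∑ i, γ i * ⟪e x i, x - y⟫ ^ 2 - 2 * ∑ i, γ i
          + ⟪x - y, x⟫))) := by
      rw [hterm1]
      simp_rw [hterm]
      have : ∀ i, γ i * (-ε * (G x * (4 * α ^ 2 * ⟪e x i, x - y⟫ ^ 2 - 2 * α))) =
          (-ε * (G x * 4 * α ^ 2)) * (γ i * ⟪e x i, x - y⟫ ^ 2) + (ε * G x * 2 * α) * γ i :=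
        fun i => by ring
      simp_rw [this]
      rw [Finset.sum_add_distrib, ← Finset.mul_sum, ← Finset.mul_sum]
      ring
    change ∑ i, γ i * ψ2 x (e x i) (e x i) - (1/2) * ψ1 x x ≤ _
    rw [hexp]
    have hbr : 1 ≤ 4 * α * ∑ i, γ i * ⟪e x i, x - y⟫ ^ 2 - 2 * ∑ i, γ i + ⟪x - y, x⟫ := by
      have h1 : (ρ / 2) ^ 2 ≤ ‖x - y‖ ^ 2 := by gcongr
      have h2 : θ * (ρ / 2) ^ 2 ≤ ∑ i, γ i * ⟪e x i, x - y⟫ ^ 2 :=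
        (mul_le_mul_of_nonneg_left h1 hθ.le).trans hsum1
      have h3 := mul_le_mul_of_nonneg_left h2 (show 0 ≤ 4 * α by positivity)
      have h4 : 4 * α * (θ * (ρ / 2) ^ 2) = 2 * n * Θ + |D| + 1 := by
        rw [hα]; field_simp; ring
      linarith
    have h5 : Real.exp (-α * (2 * ρ) ^ 2) * (α * 1) ≤
        G x * (α * (4 * α * ∑ i, γ i * ⟪e x i, x - y⟫ ^ 2 - 2 * ∑ i, γ i + ⟪x - y, x⟫)) := by
      gcongr
    have h6 := mul_le_mul_of_nonneg_left h5 hε0.le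
    linarith
  · intro x _ hxS
    exact hc x hxS

end ShrinkData

lemma aux_homog {n : ℕ} {v : EuclideanSpace ℝ (Fin n) → ℝ}
    {v1 : EuclideanSpace ℝ (Fin n) → EuclideanSpace ℝ (Fin n) →L[ℝ] ℝ}
    {v2 : EuclideanSpace ℝ (Fin n) →L[ℝ] EuclideanSpace ℝ (Fin n) →L[ℝ] ℝ}
    (h1 : ∀ x, HasFDerivAt v (v1 x) x) (hc : Continuous v1) (h2 : HasFDerivAt v1 v2 0) {m : ℝ}
    (hm : ∀ x, - v x + (1/2) * v1 x x = m) (x : EuclideanSpace ℝ (Fin n)) :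
    v x = - m + (1/2) * v2 x x := by
  have hl : ∀ s : ℝ, HasDerivAt (fun s : ℝ => s • x) x s := fun s => by
    simpa using (hasDerivAt_id s).smul_const x
  have hder : ∀ s : ℝ, s ≠ 0 → HasDerivAt (fun s : ℝ => (v (s • x) + m) / s ^ 2) 0 s := by
    intro s hs
    have h := (((h1 (s • x)).comp_hasDerivAt s (hl s)).add_const m).div (hasDerivAt_pow 2 s)
      (pow_ne_zero 2 hs)
    refine h.congr_deriv ?_
    have h3 := hm (s • x)
    rw [map_smul, smul_eq_mul] at h3
    simp only [Function.comp]
    have h4 : v1 (s • x) x = 2 * (v (s • x) + m) / s := by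
      field_simp; linarith
    rw [h4]
    field_simp
    ring
  have hconst : ∀ s : ℝ, 0 < s → v (s • x) + m = s ^ 2 * (v x + m) := by
    intro s hs
    have := isOpen_Ioi.is_const_of_deriv_eq_zero (s := Set.Ioi (0:ℝ)) isPreconnected_Ioi
      (f := fun s : ℝ => (v (s • x) + m) / s ^ 2)
      (fun t ht => (hder t (ne_of_gt ht)).differentiableAt.differentiableWithinAt)
      (fun t ht => (hder t (ne_of_gt ht)).deriv) (Set.mem_Ioi.2 hs)
      (Set.mem_Ioi.2 one_pos)
    simp only [one_smul, one_pow, div_one] at this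
    rw [← this]; field_simp
  have hline : ∀ s : ℝ, 0 < s → v1 (s • x) x = 2 * (v x + m) * s := by
    intro s hs
    have h3 := hm (s • x)
    rw [map_smul, smul_eq_mul] at h3
    have h4 := hconst s hs
    have h5 : s * v1 (s • x) x = s * (2 * (v x + m) * s) := by linarith
    exact mul_left_cancel₀ hs.ne' h5
  have h0 : v1 ((0:ℝ) • x) x = 2 * (v x + m) * 0 := by
    have hcl : IsClosed {s : ℝ | v1 (s • x) x = 2 * (v x + m) * s} :=
      isClosed_eq (by fun_prop) (by fun_prop)
    have : (0:ℝ) ∈ closure (Set.Ioi (0:ℝ)) := by simp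
    exact hcl.closure_subset_iff.2 (fun s hs => hline s hs) this
  have hd1 : HasDerivAt (fun s : ℝ => v1 (s • x) x) (v2 x x) 0 := by
    have h2' : HasFDerivAt v1 v2 ((0:ℝ) • x) := by simpa using h2
    have := h2'.comp_hasDerivAt (0:ℝ) (hl 0)
    exact ((ContinuousLinearMap.apply ℝ ℝ x).hasFDerivAt).comp_hasDerivAt (0 : ℝ) this
  have hd2 : HasDerivAt (fun s : ℝ => 2 * (v x + m) * s) (2 * (v x + m)) 0 := by
    simpa using (hasDerivAt_id (0:ℝ)).const_mul (2 * (v x + m))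
  have hd3 : HasDerivWithinAt (fun s : ℝ => v1 (s • x) x) (2 * (v x + m)) (Set.Ici 0) 0 := by
    refine hd2.hasDerivWithinAt.congr (fun s hs => ?_) h0
    rcases eq_or_lt_of_le (show (0:ℝ) ≤ s from hs) with h | h
    · rw [← h]; exact h0
    · exact hline s h
  have := (uniqueDiffOn_Ici (0:ℝ) 0 (by simp)).eq_deriv _ hd1.hasDerivWithinAt hd3
  linarith

lemma hess_apply {n : ℕ} (u : EuclideanSpace ℝ (Fin n) → ℝ) (x v y : EuclideanSpace ℝ (Fin n)) :
    fderiv ℝ (fderiv ℝ u) x v y = ∑ i, ∑ j, Hess n u x i j * v i * y j := by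
  have hv : ∀ v : EuclideanSpace ℝ (Fin n), v = ∑ i, v i • EuclideanSpace.single i (1:ℝ) := by
    intro v
    ext j
    simp [Finset.sum_apply, Pi.single_apply]
  conv_lhs => rw [hv v, hv y]
  simp only [map_sum, map_smul, _root_.sum_apply, _root_.smul_apply, smul_eq_mul]
  conv_rhs => rw [Finset.sum_comm]
  refine Finset.sum_congr rfl fun i _ => ?_
  rw [Finset.mul_sum]
  refine Finset.sum_congr rfl fun j _ => ?_
  simp [Hess, iteratedFDeriv_two_apply]
  ring

lemma hess_eig {n : ℕ} (u : EuclideanSpace ℝ (Fin n) → ℝ) (x : EuclideanSpace ℝ (Fin n))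
    (h : (Hess n u x).IsHermitian) (i : Fin n) (y : EuclideanSpace ℝ (Fin n)) :
    fderiv ℝ (fderiv ℝ u) x (h.eigenvectorBasis i) y =
      h.eigenvalues i * ⟪h.eigenvectorBasis i, y⟫ := by
  rw [hess_apply, Finset.sum_comm]
  have h1 : ∀ j, ∑ l, Hess n u x l j * h.eigenvectorBasis i l * y j =
      h.eigenvalues i * (h.eigenvectorBasis i j * y j) := by
    intro j
    have h2 := congrFun (h.mulVec_eigenvectorBasis i) j
    simp only [Matrix.mulVec, dotProduct, Pi.smul_apply, smul_eq_mul] at h2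
    rw [← Finset.sum_mul, ← mul_assoc, ← h2]
    congr 1
    refine Finset.sum_congr rfl fun l _ => ?_
    have := h.apply l j
    simp at this
    rw [this]
  simp_rw [h1]
  rw [← Finset.mul_sum]
  congr 1
  rw [PiLp.inner_apply]
  refine Finset.sum_congr rfl fun j _ => ?_
  simp [mul_comm]

lemma hess_quad {n : ℕ} (A : Matrix (Fin n) (Fin n) ℝ) (h : A.IsHermitian) (i : Fin n) :
    (h.eigenvectorBasis i : Fin n → ℝ) ⬝ᵥ (A *ᵥ (h.eigenvectorBasis i : Fin n → ℝ)) =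
      h.eigenvalues i ∧
    (h.eigenvectorBasis i : Fin n → ℝ) ⬝ᵥ (h.eigenvectorBasis i : Fin n → ℝ) = 1 := by
  have h1 : (h.eigenvectorBasis i : Fin n → ℝ) ⬝ᵥ (h.eigenvectorBasis i : Fin n → ℝ) = 1 := by
    have h2 : ⟪h.eigenvectorBasis i, h.eigenvectorBasis i⟫ = 1 := by simp
    rw [PiLp.inner_apply] at h2
    rw [← h2]
    refine Finset.sum_congr rfl fun j _ => ?_
    simp
    ring
  refine ⟨?_, h1⟩
  rw [h.mulVec_eigenvectorBasis, dotProduct_smul, h1]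
  simp

lemma eig_pos_one {n : ℕ} (A : Matrix (Fin n) (Fin n) ℝ) (h : A.IsHermitian) (t : ℝ)
    (hp : (A + t • (1 : Matrix (Fin n) (Fin n) ℝ)).PosDef) (i : Fin n) :
    0 < h.eigenvalues i + t := by
  obtain ⟨h1, h2⟩ := hess_quad A h i
  have hne : (h.eigenvectorBasis i : Fin n → ℝ) ≠ 0 := by
    intro h0; rw [h0] at h2; simp at h2
  have := hp.dotProduct_mulVec_pos hne
  rw [star_trivial, Matrix.add_mulVec, dotProduct_add, h1, Matrix.smul_mulVec, Matrix.one_mulVec,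
    dotProduct_smul, h2] at this
  simpa using this

lemma eig_pos_two {n : ℕ} (A : Matrix (Fin n) (Fin n) ℝ) (h : A.IsHermitian) (t : ℝ)
    (hp : (-(t • (1 : Matrix (Fin n) (Fin n) ℝ)) - A).PosDef) (i : Fin n) :
    0 < -h.eigenvalues i - t := by
  obtain ⟨h1, h2⟩ := hess_quad A h i
  have hne : (h.eigenvectorBasis i : Fin n → ℝ) ≠ 0 := by
    intro h0; rw [h0] at h2; simp at h2
  have := hp.dotProduct_mulVec_pos hne
  rw [star_trivial, Matrix.sub_mulVec, dotProduct_sub, h1, Matrix.neg_mulVec, Matrix.smul_mulVec,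
    Matrix.one_mulVec, dotProduct_neg, dotProduct_smul, h2] at this
  simp at this
  linarith

end core

theorem bernstein_tau_lt_pi_div_four (n : ℕ) (hn : 1 ≤ n) (a b : ℝ)
    (ha : 1 < a) (hb : b = Real.sqrt (a ^ 2 - 1))
    (u : EuclideanSpace ℝ (Fin n) → ℝ)
    (hu : ContDiff ℝ 2 u)
    (heq : ∀ x, (Real.sqrt (a ^ 2 + 1) / (2 * b)) *
        ∑ i, Real.log ((eigs (Hess n u x) i + a - b) / (eigs (Hess n u x) i + a + b))
      = -u x + (1/2) * ⟪x, gradient u x⟫)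
    (hadm : (∀ x, (Hess n u x + (a - b) • (1 : Matrix (Fin n) (Fin n) ℝ)).PosDef) ∨
      (∀ x, (-((a + b) • (1 : Matrix (Fin n) (Fin n) ℝ)) - Hess n u x).PosDef)) :
    IsQuadPoly n u ∧
    ∃ (A : Matrix (Fin n) (Fin n) ℝ) (hA : A.IsHermitian),
      ∀ x, u x = -(Real.sqrt (a ^ 2 + 1) / (2 * b)) *
          (∑ i, Real.log ((hA.eigenvalues i + a - b) / (hA.eigenvalues i + a + b)))
        + (1/2) * (∑ i, ∑ j, A i j * x i * x j) := by
  have hbpos : 0 < b := by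
    rw [hb]; apply Real.sqrt_pos.2; nlinarith
  set k := Real.sqrt (a ^ 2 + 1) / (2 * b) with hk
  have hkpos : 0 < k := by
    have : 0 < Real.sqrt (a ^ 2 + 1) := Real.sqrt_pos.2 (by positivity)
    positivity
  set u1 := fderiv ℝ u with hu1
  set u2 := fderiv ℝ u1 with hu2
  have hc1 : ContDiff ℝ 1 u1 := hu.fderiv_right (by norm_num)
  have hd1 : ∀ x, HasFDerivAt u (u1 x) x := fun x =>
    (hu.differentiable (by norm_num) x).hasFDerivAt
  have hd2 : ∀ x, HasFDerivAt u1 (u2 x) x := fun x =>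
    (hc1.differentiable (by norm_num) x).hasFDerivAt
  have hc2 : Continuous u2 := hc1.continuous_fderiv (by norm_num)
  have hH : ∀ x, (Hess n u x).IsHermitian := by
    intro x
    rcases hadm with h | h
    · have h1 := (h x).isHermitian.sub
        ((Matrix.isHermitian_one (n := Fin n) (α := ℝ)).smul (IsSelfAdjoint.all (a - b)))
      simpa using h1
    · have h1 := ((Matrix.isHermitian_one (n := Fin n) (α := ℝ)).smul
        (IsSelfAdjoint.all (a + b))).neg.sub (h x).isHermitian
      simpa using h1
  have heq' : ∀ x, k * ∑ i, Real.log (((hH x).eigenvalues i + a - b) /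
      ((hH x).eigenvalues i + a + b)) = - u x + (1/2) * u1 x x := by
    intro x
    have h := heq x
    rw [inner_gradient_right] at h
    simp only [eigs, dif_pos (hH x), conj_trivial] at h
    exact h
  -- the phase is constant
  have hsq : ∀ x : EuclideanSpace ℝ (Fin n), HasFDerivAt (fun x : EuclideanSpace ℝ (Fin n) =>
      ‖x‖ ^ 2) ((2 : ℝ) • innerB n x) x := fun x => by simpa using innerB_deriv 0 x
  have hsq' : ∀ (t : ℝ) (x : EuclideanSpace ℝ (Fin n)), HasFDerivAt
      (fun x : EuclideanSpace ℝ (Fin n) => t * ‖x‖ ^ 2) (t • ((2 : ℝ) • innerB n x)) x :=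
    fun t x => (hsq x).const_smul t
  have hlin : ∀ (t : ℝ) (x : EuclideanSpace ℝ (Fin n)), HasFDerivAt
      (fun x : EuclideanSpace ℝ (Fin n) => t • ((2 : ℝ) • innerB n x))
      (t • ((2 : ℝ) • innerB n)) x := fun t x =>
    (t • ((2 : ℝ) • innerB n)).hasFDerivAt
  have hconst : ∃ m, ∀ x, - u x + (1/2) * u1 x x = m := by
    rcases hadm with h | h
    · have D : ShrinkData n k (2 * b) (fun x => u x + ((a - b) / 2) * ‖x‖ ^ 2)
          (fun x => u1 x + ((a - b) / 2) • ((2 : ℝ) • innerB n x))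
          (fun x => u2 x + ((a - b) / 2) • ((2 : ℝ) • innerB n))
          (fun x => (hH x).eigenvectorBasis) (fun x i => (hH x).eigenvalues i + (a - b)) := by
        refine ⟨hn, hkpos, by positivity, fun x => (hd1 x).add (hsq' _ x),
          fun x => (hd2 x).add (hlin _ x),
          hc2.add continuous_const, fun x i => eig_pos_one _ (hH x) _ (h x) i, ?_, ?_⟩
        · intro x i y
          simp only [_root_.add_apply, _root_.smul_apply, smul_eq_mul, innerB_apply]
          rw [hu2, hu1, hess_eig]
          ring
        · intro x
          rw [← Finset.mul_sum]
          simp only [_root_.add_apply, _root_.smul_apply, smul_eq_mul, innerB_apply,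
            real_inner_self_eq_norm_sq]
          have h1 := heq' x
          have h2 : ∀ i, (hH x).eigenvalues i + (a - b) + 2 * b = (hH x).eigenvalues i + a + b :=
            fun i => by ring
          have h3 : ∀ i, (hH x).eigenvalues i + (a - b) = (hH x).eigenvalues i + a - b :=
            fun i => by ring
          simp_rw [h2, h3]
          rw [h1]; ring
      obtain ⟨m, hm⟩ := D.phi_const
      refine ⟨m, fun x => ?_⟩
      rw [← hm x]
      simp only [_root_.add_apply, _root_.smul_apply, smul_eq_mul, innerB_apply,
        real_inner_self_eq_norm_sq]
      ring
    · have D : ShrinkData n k (2 * b) (fun x => - u x + (-(a + b) / 2) * ‖x‖ ^ 2)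
          (fun x => - u1 x + (-(a + b) / 2) • ((2 : ℝ) • innerB n x))
          (fun x => - u2 x + (-(a + b) / 2) • ((2 : ℝ) • innerB n))
          (fun x => (hH x).eigenvectorBasis) (fun x i => -(hH x).eigenvalues i - (a + b)) := by
        refine ⟨hn, hkpos, by positivity, fun x => (hd1 x).neg.add (hsq' _ x),
          fun x => (hd2 x).neg.add (hlin _ x),
          hc2.neg.add continuous_const, fun x i => eig_pos_two _ (hH x) _ (h x) i, ?_, ?_⟩
        · intro x i y
          simp only [_root_.add_apply, _root_.smul_apply, _root_.neg_apply, smul_eq_mul,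
            innerB_apply]
          rw [hu2, hu1, hess_eig]
          ring
        · intro x
          rw [← Finset.mul_sum]
          simp only [_root_.add_apply, _root_.smul_apply, _root_.neg_apply, smul_eq_mul,
            innerB_apply, real_inner_self_eq_norm_sq]
          have h1 := heq' x
          have h2 : ∀ i, Real.log ((-(hH x).eigenvalues i - (a + b)) /
              (-(hH x).eigenvalues i - (a + b) + 2 * b)) =
              - Real.log (((hH x).eigenvalues i + a - b) / ((hH x).eigenvalues i + a + b)) := by
            intro i
            rw [← Real.log_inv, inv_div, ← neg_div_neg_eq]
            congr 2 <;> ring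
          simp_rw [h2]
          rw [Finset.sum_neg_distrib, mul_neg, h1]; ring
      obtain ⟨m, hm⟩ := D.phi_const
      refine ⟨-m, fun x => ?_⟩
      rw [← hm x]
      simp only [_root_.add_apply, _root_.smul_apply, _root_.neg_apply, smul_eq_mul, innerB_apply,
        real_inner_self_eq_norm_sq]
      ring
  obtain ⟨m, hm⟩ := hconst
  have hfinal : ∀ x, u x = - m + (1/2) * ∑ i, ∑ j, Hess n u 0 i j * x i * x j := by
    intro x
    rw [← hess_apply]
    exact aux_homog hd1 hc1.continuous (hd2 0) hm x
  refine ⟨⟨Hess n u 0, 0, -m, ?_, fun x => ?_⟩, Hess n u 0, hH 0, fun x => ?_⟩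
  · have := hH 0
    rwa [Matrix.IsHermitian, Matrix.conjTranspose_eq_transpose_of_trivial] at this
  · rw [hfinal x]; simp; ring
  · rw [neg_mul, heq' 0, hm 0, hfinal x]
end
end
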